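/- arXiv:2602.08721 — 4 statements merged into one kernel-verified Lean document; each statement's English description precedes it below -/
import Mathlib

section
/- Let F, G : ℕ × ℕ → ℂ be two functions satisfying the Wilf–Zeilberger relation F(n+1,k) − F(n,k) = G(n,k+1) − G(n,k) for all n, k ∈ ℕ. Assume that (i) the series ∑_{k≥0} F(0,k) converges, (ii) the series ∑_{n≥0} G(n,0) converges, and (iii) for each n ∈ ℕ the limit g(n) := lim_{k→∞} G(n,k) exists and the series ∑_{n≥0} g(n) converges. Then the limit L := lim_{n→∞} ∑_{k≥0} F(n,k) exists and is finite, and ∑_{k≥0} F(0,k) + ∑_{n≥0} g(n) = ∑_{n≥0} G(n,0) + L. -/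
open Filter Topology

/-- **Wilf–Zeilberger summation lemma.**
If `F G : ℕ → ℕ → ℂ` satisfy the WZ relation
`F (n+1) k - F n k = G n (k+1) - G n k`, the series `∑_{k≥0} F 0 k` converges (to `S₁`),
the series `∑_{n≥0} G n 0` converges (to `S₂`), and for each `n` the limit
`g n = lim_{k→∞} G n k` exists with `∑_{n≥0} g n` convergent (to `S₃`), then for each `n`
the series `∑_{k≥0} F n k` converges, its value `s n` tends to a finite limit `L` as
`n → ∞`, and `S₁ + S₃ = S₂ + L`. -/
theorem wz_summation
    (F G : ℕ → ℕ → ℂ)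
    (hWZ : ∀ n k : ℕ, F (n + 1) k - F n k = G n (k + 1) - G n k)
    (S₁ : ℂ)
    (h₁ : Tendsto (fun N => ∑ k ∈ Finset.range N, F 0 k) atTop (𝓝 S₁))
    (S₂ : ℂ)
    (h₂ : Tendsto (fun N => ∑ n ∈ Finset.range N, G n 0) atTop (𝓝 S₂))
    (g : ℕ → ℂ)
    (hg : ∀ n : ℕ, Tendsto (fun k => G n k) atTop (𝓝 (g n)))
    (S₃ : ℂ)
    (h₃ : Tendsto (fun N => ∑ n ∈ Finset.range N, g n) atTop (𝓝 S₃)) :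
    ∃ (s : ℕ → ℂ) (L : ℂ),
      (∀ n : ℕ, Tendsto (fun N => ∑ k ∈ Finset.range N, F n k) atTop (𝓝 (s n))) ∧
      Tendsto s atTop (𝓝 L) ∧
      S₁ + S₃ = S₂ + L := by
  refine ⟨fun n => S₁ + ∑ i ∈ Finset.range n, g i - ∑ i ∈ Finset.range n, G i 0,
    S₁ + S₃ - S₂, fun n => ?_, (h₃.const_add S₁).sub h₂, by ring⟩
  induction n with
  | zero => simpa using h₁
  | succ n ih =>
    have key : ∀ N, ∑ k ∈ Finset.range N, F (n + 1) k =
        ∑ k ∈ Finset.range N, F n k + (G n N - G n 0) := fun N => by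
      rw [← Finset.sum_range_sub (G n) N, ← Finset.sum_add_distrib]
      exact Finset.sum_congr rfl fun k _ => by rw [← hWZ n k]; ring
    simp only [key, Finset.sum_range_succ]
    convert ih.add ((hg n).sub_const (G n 0)) using 2
    ring
end

section
/- The series identity ∑_{n≥1} (−1/2^10)^n · ((1)_n)^5 / ((1/2)_n)^5 · (205n² − 160n + 32)/n^5 = −2ζ(3) holds, where ζ is the Riemann zeta function. -/
/-- The rising factorial (Pochhammer symbol) `(a)ₙ = a(a+1)⋯(a+n-1)`. -/
noncomputable def risingFactorial (a : ℝ) (n : ℕ) : ℝ :=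
  ∏ i ∈ Finset.range n, (a + i)

open Filter Topology

namespace AperyZetaThree

/-- The summand `F(n, k)` of the WZ pair; `F(0, k) = 2 / (k + 1) ^ 3`. -/
noncomputable def wzF (n k : ℕ) : ℝ :=
  (-1) ^ n * (n.factorial : ℝ) ^ 6 / ((2 * n).factorial : ℝ) * (3 * n + 2 * k + 2) *
    (((n + k).factorial : ℝ) / ((2 * n + k + 1).factorial : ℝ)) ^ 4

/-- The polynomial factor of the WZ mate `wzG`. -/
def wzPoly (n k : ℝ) : ℝ :=
  (n + 1) ^ 5 * (205 * n ^ 2 + 250 * n + 77)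
  + (574 * n ^ 6 + 3060 * n ^ 5 + 6754 * n ^ 4 + 7896 * n ^ 3 + 5154 * n ^ 2 + 1780 * n + 254) * k
  + (664 * n ^ 5 + 2952 * n ^ 4 + 5216 * n ^ 3 + 4576 * n ^ 2 + 1992 * n + 344) * k ^ 2
  + (408 * n ^ 4 + 1456 * n ^ 3 + 1936 * n ^ 2 + 1136 * n + 248) * k ^ 3
  + (141 * n ^ 3 + 381 * n ^ 2 + 341 * n + 101) * k ^ 4
  + (26 * n ^ 2 + 48 * n + 22) * k ^ 5
  + (2 * n + 2) * k ^ 6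

/-- The WZ mate of `wzF`. -/
noncomputable def wzG (n k : ℕ) : ℝ :=
  (-1) ^ n * (n.factorial : ℝ) ^ 6 / ((2 * n + 2).factorial : ℝ) * wzPoly n k *
    (((n + k).factorial : ℝ) / ((2 * n + k + 2).factorial : ℝ)) ^ 4

lemma wzF_succ_sub (n k : ℕ) : wzF (n + 1) k - wzF n k = wzG n (k + 1) - wzG n k := by
  have hx : ((n + 1 + k).factorial : ℝ) = (n + k + 1) * (n + k).factorial := by
    rw [show n + 1 + k = n + k + 1 by ring, Nat.factorial_succ]; push_cast; ring
  have hx' : ((n + (k + 1)).factorial : ℝ) = (n + k + 1) * (n + k).factorial := by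
    rw [← add_assoc, Nat.factorial_succ]; push_cast; ring
  have hy : ((2 * n + k + 2).factorial : ℝ) = (2 * n + k + 2) * (2 * n + k + 1).factorial := by
    rw [Nat.factorial_succ]; push_cast; ring
  have hy' : ((2 * n + (k + 1) + 2).factorial : ℝ)
      = (2 * n + k + 3) * ((2 * n + k + 2) * (2 * n + k + 1).factorial) := by
    rw [← hy, show 2 * n + (k + 1) + 2 = 2 * n + k + 2 + 1 by ring, Nat.factorial_succ]
    push_cast; ring
  have hy'' : ((2 * (n + 1) + k + 1).factorial : ℝ)
      = (2 * n + k + 3) * ((2 * n + k + 2) * (2 * n + k + 1).factorial) := by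
    rw [← hy', show 2 * (n + 1) + k + 1 = 2 * n + (k + 1) + 2 by ring]
  have hz : ((2 * n + 2).factorial : ℝ) = (2 * n + 2) * ((2 * n + 1) * (2 * n).factorial) := by
    rw [Nat.factorial_succ, Nat.factorial_succ]; push_cast; ring
  have hn : ((n + 1).factorial : ℝ) = (n + 1) * n.factorial := by
    rw [Nat.factorial_succ]; push_cast; ring
  have hz' : ((2 * (n + 1)).factorial : ℝ) = (2 * n + 2) * ((2 * n + 1) * (2 * n).factorial) := by
    rw [← hz, mul_add]
  unfold wzF wzG
  rw [hx, hx', hy, hy', hy'', hz, hz', hn]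
  have h1 : ((2 * n + k + 1).factorial : ℝ) ≠ 0 := by positivity
  have h2 : ((2 * n).factorial : ℝ) ≠ 0 := by positivity
  generalize ((n + k).factorial : ℝ) = x
  generalize ((2 * n + k + 1).factorial : ℝ) = y at *
  generalize ((2 * n).factorial : ℝ) = z at *
  generalize (n.factorial : ℝ) = w
  have h3 : (2 * n + k + 3 : ℝ) ≠ 0 := by positivity
  have h4 : (2 * n + k + 2 : ℝ) ≠ 0 := by positivity
  have h5 : (2 * n + 2 : ℝ) ≠ 0 := by positivity
  have h6 : (2 * n + 1 : ℝ) ≠ 0 := by positivity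
  unfold wzPoly
  push_cast
  rw [pow_succ]
  generalize ((-1 : ℝ) ^ n) = s
  generalize (n : ℝ) = a at *
  generalize (k : ℝ) = b at *
  have hF : ∀ u v c m p q r t : ℝ, p ≠ 0 → q ≠ 0 → r ≠ 0 → t ≠ 0 →
      s * -1 * (c * w) ^ 6 / (p * (q * z)) * u * (m * x / (r * (t * y))) ^ 4
        - s * w ^ 6 / z * v * (x / y) ^ 4
      = s * w ^ 6 * x ^ 4 / (z * y ^ 4 * p * q * r ^ 4 * t ^ 4) *
          (-c ^ 6 * u * m ^ 4 - v * (p * q * r ^ 4 * t ^ 4)) := by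
    intros
    field_simp
  have hG : ∀ u v m p q r t : ℝ, p ≠ 0 → q ≠ 0 → r ≠ 0 → t ≠ 0 →
      s * w ^ 6 / (p * (q * z)) * u * (m * x / (r * (t * y))) ^ 4
        - s * w ^ 6 / (p * (q * z)) * v * (x / (t * y)) ^ 4
      = s * w ^ 6 * x ^ 4 / (z * y ^ 4 * p * q * r ^ 4 * t ^ 4) *
          (u * m ^ 4 - v * r ^ 4) := by
    intros
    field_simp
  rw [hF _ _ _ _ _ _ _ _ h5 h6 h3 h4, hG _ _ _ _ _ _ _ h5 h6 h3 h4]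
  congr 1
  ring

lemma abs_wzF_le (n k : ℕ) : |wzF n k| ≤ 2 / ((n : ℝ) + 1) * (1 / ((k : ℝ) + 1) ^ 2) := by
  have hw : (n.factorial : ℝ) ^ 2 ≤ (2 * n).factorial := by
    have := Nat.le_of_dvd (Nat.factorial_pos _) (Nat.factorial_mul_factorial_dvd_factorial_add n n)
    rw [← two_mul, ← sq] at this
    exact_mod_cast this
  have hq : (n.factorial : ℝ) * ((n + k).factorial / (2 * n + k + 1).factorial)
      ≤ 1 / (2 * n + k + 1) := by
    have := Nat.le_of_dvd (Nat.factorial_pos _)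
      (Nat.factorial_mul_factorial_dvd_factorial_add n (n + k))
    rw [show n + (n + k) = 2 * n + k by ring] at this
    have h : (n.factorial : ℝ) * (n + k).factorial ≤ (2 * n + k).factorial := by exact_mod_cast this
    rw [Nat.factorial_succ, ← mul_div_assoc, div_le_div_iff₀ (by positivity) (by positivity)]
    push_cast
    nlinarith [show (0 : ℝ) ≤ 2 * n + k + 1 by positivity]
  have habs : |wzF n k| = (n.factorial : ℝ) ^ 2 / (2 * n).factorial * (3 * n + 2 * k + 2) *
      ((n.factorial : ℝ) * ((n + k).factorial / (2 * n + k + 1).factorial)) ^ 4 := by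
    unfold wzF
    rw [abs_mul, abs_mul, abs_div, abs_mul, abs_pow, abs_neg, abs_one, one_pow, one_mul,
      abs_of_nonneg (by positivity : (0 : ℝ) ≤ (n.factorial : ℝ) ^ 6),
      abs_of_nonneg (by positivity : (0 : ℝ) ≤ ((2 * n).factorial : ℝ)),
      abs_of_nonneg (by positivity : (0 : ℝ) ≤ (3 * n + 2 * k + 2 : ℝ)),
      abs_of_nonneg (by positivity :
        (0 : ℝ) ≤ (((n + k).factorial : ℝ) / (2 * n + k + 1).factorial) ^ 4)]
    ring
  rw [habs]
  calc _ ≤ 1 * (2 * (2 * n + k + 1)) * (1 / (2 * n + k + 1 : ℝ)) ^ 4 := by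
        gcongr
        · exact div_le_one_of_le₀ hw (by positivity)
        · linarith [show (0 : ℝ) ≤ n by positivity]
    _ = 2 / ((2 * n + k + 1) * (2 * n + k + 1 : ℝ) ^ 2) := by
        field_simp
    _ ≤ 2 / ((n + 1) * (k + 1 : ℝ) ^ 2) := by
        have : (0 : ℝ) ≤ n := by positivity
        have : (0 : ℝ) ≤ k := by positivity
        gcongr <;> linarith
    _ = _ := by field_simp

lemma summable_one_div_succ_pow {m : ℕ} (hm : 1 < m) :
    Summable fun k : ℕ => 1 / ((k : ℝ) + 1) ^ m := by
  simpa using (summable_nat_add_iff 1).2 (Real.summable_one_div_nat_pow.2 hm)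

lemma summable_wzF (n : ℕ) : Summable (wzF n) :=
  .of_norm_bounded ((summable_one_div_succ_pow one_lt_two).mul_left _) (abs_wzF_le n)

lemma tendsto_tsum_wzF : Tendsto (fun n => ∑' k, wzF n k) atTop (𝓝 0) := by
  have hs := summable_one_div_succ_pow one_lt_two
  refine squeeze_zero_norm (a := fun n : ℕ => 2 / ((n : ℝ) + 1) * ∑' k : ℕ, 1 / ((k : ℝ) + 1) ^ 2)
    (fun n => ?_) ?_
  · rw [← tsum_mul_left]
    exact tsum_of_norm_bounded (hs.mul_left _).hasSum (abs_wzF_le n)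
  · have h := ((tendsto_one_div_add_atTop_nhds_zero_nat (𝕜 := ℝ)).const_mul 2).mul_const
      (∑' k : ℕ, 1 / ((k : ℝ) + 1) ^ 2)
    simpa [div_eq_mul_inv] using h

lemma wzPoly_le {n k : ℝ} (hn : 0 ≤ n) (hk : 0 ≤ k) :
    wzPoly n k ≤ wzPoly n 1 * (k + 1) ^ 6 := by
  have h0 : 1 ≤ (k + 1) ^ 6 := one_le_pow₀ (by linarith)
  have h : ∀ i ≤ 6, k ^ i ≤ (k + 1) ^ 6 := fun i hi =>
    (pow_le_pow_left₀ hk (by linarith) i).trans (pow_le_pow_right₀ (by linarith) hi)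
  have h1 : k ≤ (k + 1) ^ 6 := by simpa using h 1 (by norm_num)
  unfold wzPoly
  refine (add_le_add (add_le_add (add_le_add (add_le_add (add_le_add (add_le_add
    (le_mul_of_one_le_right (by positivity) h0)
    (mul_le_mul_of_nonneg_left h1 (by positivity)))
    (mul_le_mul_of_nonneg_left (h 2 (by norm_num)) (by positivity)))
    (mul_le_mul_of_nonneg_left (h 3 (by norm_num)) (by positivity)))
    (mul_le_mul_of_nonneg_left (h 4 (by norm_num)) (by positivity)))
    (mul_le_mul_of_nonneg_left (h 5 (by norm_num)) (by positivity)))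
    (mul_le_mul_of_nonneg_left (h 6 (by norm_num)) (by positivity))).trans (le_of_eq ?_)
  ring

lemma tendsto_wzG (n : ℕ) : Tendsto (wzG n) atTop (𝓝 0) := by
  set c : ℝ := (n.factorial : ℝ) ^ 6 / ((2 * n + 2).factorial : ℝ)
  refine squeeze_zero_norm (a := fun k : ℕ => c * wzPoly n 1 * (1 / ((k : ℝ) + 1))) (fun k => ?_) ?_
  · have hq : ((n + k).factorial : ℝ) / (2 * n + k + 2).factorial ≤ 1 / ((k : ℝ) + 1) ^ 2 := by
      rw [div_le_div_iff₀ (by positivity) (by positivity), one_mul]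
      have h : (n + k).factorial * (k + 1) ^ 2 ≤ (2 * n + k + 2).factorial := calc
        _ ≤ (n + k).factorial * (n + k + 1) ^ 2 := by gcongr; omega
        _ ≤ (n + k + 2).factorial := Nat.factorial_mul_pow_le_factorial
        _ ≤ _ := Nat.factorial_le (by omega)
      exact_mod_cast h
    have hp : 0 ≤ wzPoly n k := by unfold wzPoly; positivity
    have hp1 : 0 ≤ wzPoly n 1 := by unfold wzPoly; positivity
    have habs : ‖wzG n k‖ = c * wzPoly n k *
        (((n + k).factorial : ℝ) / ((2 * n + k + 2).factorial : ℝ)) ^ 4 := by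
      unfold wzG
      rw [mul_div_assoc, norm_mul, norm_mul, norm_mul, norm_pow, norm_neg, norm_one, one_pow,
        one_mul, Real.norm_of_nonneg hp, Real.norm_of_nonneg (by positivity),
        Real.norm_of_nonneg (by positivity)]
    rw [habs]
    calc _ ≤ c * (wzPoly n 1 * (k + 1) ^ 6) * (1 / ((k : ℝ) + 1) ^ 2) ^ 4 := by
          gcongr
          exact wzPoly_le (by positivity) (by positivity)
      _ = c * wzPoly n 1 * (1 / ((k : ℝ) + 1) ^ 2) := by field_simp
      _ ≤ _ := by
          gcongr
          exact le_self_pow₀ (by linarith [show (0 : ℝ) ≤ k by positivity]) two_ne_zero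
  · simpa using (tendsto_one_div_add_atTop_nhds_zero_nat (𝕜 := ℝ)).const_mul (c * wzPoly n 1)

lemma tsum_wzF_sub_succ (n : ℕ) : ∑' k, wzF n k - ∑' k, wzF (n + 1) k = wzG n 0 := by
  have h1 := ((summable_wzF (n + 1)).sub (summable_wzF n)).hasSum.tendsto_sum_nat
  rw [(summable_wzF (n + 1)).tsum_sub (summable_wzF n)] at h1
  simp only [wzF_succ_sub, Finset.sum_range_sub] at h1
  linarith [tendsto_nhds_unique h1 ((tendsto_wzG n).sub_const (wzG n 0))]

lemma tendsto_sum_wzG : Tendsto (fun N => ∑ n ∈ Finset.range N, wzG n 0) atTop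
    (𝓝 (∑' k, wzF 0 k)) := by
  simp only [← tsum_wzF_sub_succ, Finset.sum_range_sub']
  simpa using tendsto_tsum_wzF.const_sub (∑' k, wzF 0 k)

lemma wzF_zero (k : ℕ) : wzF 0 k = 2 * (1 / ((k : ℝ) + 1) ^ 3) := by
  have : (k.factorial : ℝ) ≠ 0 := by positivity
  simp only [wzF, mul_zero, zero_add, Nat.factorial_succ]
  push_cast
  field_simp
  simp
  ring

lemma ofReal_tsum_wzF_zero : ((∑' k, wzF 0 k : ℝ) : ℂ) = 2 * riemannZeta 3 := by
  have h := zeta_nat_eq_tsum_of_gt_one (k := 3) (by norm_num)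
  have hs : Summable fun n : ℕ => 1 / (n : ℂ) ^ 3 := by
    have := Real.summable_one_div_nat_pow.2 (by norm_num : 1 < 3)
    simpa using Complex.summable_ofReal.2 this
  rw [hs.tsum_eq_zero_add] at h
  simp only [wzF_zero, tsum_mul_left]
  push_cast at h ⊢
  rw [h]
  simp

lemma risingFactorial_one (n : ℕ) : risingFactorial 1 n = n.factorial := by
  rw [risingFactorial, ← Finset.prod_range_add_one_eq_factorial]
  push_cast
  exact Finset.prod_congr rfl fun i _ => add_comm _ _

lemma risingFactorial_half (n : ℕ) :
    risingFactorial (1 / 2) n = (2 * n).factorial / (4 ^ n * n.factorial) := by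
  induction n with
  | zero => simp [risingFactorial]
  | succ n ih =>
    rw [risingFactorial, Finset.prod_range_succ, ← risingFactorial, ih,
      show 2 * (n + 1) = 2 * n + 1 + 1 by ring, Nat.factorial_succ, Nat.factorial_succ, Nat.factorial_succ]
    push_cast
    field_simp
    ring

lemma term_eq_neg_wzG (n : ℕ) :
    (-1 / 2 ^ 10 : ℝ) ^ (n + 1) * (risingFactorial 1 (n + 1)) ^ 5 /
        (risingFactorial (1 / 2) (n + 1)) ^ 5 *
        (205 * ((n : ℝ) + 1) ^ 2 - 160 * ((n : ℝ) + 1) + 32) / ((n : ℝ) + 1) ^ 5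
      = -wzG n 0 := by
  have h4 : (2 ^ 10 : ℝ) ^ (n + 1) = (4 ^ (n + 1)) ^ 5 := by
    rw [← pow_mul, ← pow_mul, show (4 : ℝ) = 2 ^ 2 by norm_num, ← pow_mul]; ring_nf
  rw [risingFactorial_one, risingFactorial_half, div_pow, h4, wzG, wzPoly,
    show 2 * (n + 1) = 2 * n + 2 by ring, Nat.factorial_succ n]
  have h1 : ((2 * n + 2).factorial : ℝ) ≠ 0 := by positivity
  have h2 : (n.factorial : ℝ) ≠ 0 := by positivity
  simp only [add_zero]
  push_cast
  generalize ((2 * n + 2).factorial : ℝ) = y at *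
  field_simp
  ring

lemma abs_wzG_zero_le (n : ℕ) : |wzG n 0| ≤ 532 * (1 / ((n : ℝ) + 1) ^ 3) := by
  have hq : ((n + 1).factorial : ℝ) ^ 2 ≤ (2 * n + 2).factorial := by
    have := Nat.le_of_dvd (Nat.factorial_pos _)
      (Nat.factorial_mul_factorial_dvd_factorial_add (n + 1) (n + 1))
    rw [← sq, show n + 1 + (n + 1) = 2 * n + 2 by ring] at this
    exact_mod_cast this
  have hn : (0 : ℝ) ≤ n := by positivity
  have heq : wzG n 0 = (-1) ^ n * ((((n + 1).factorial : ℝ) ^ 2 / (2 * n + 2).factorial) ^ 5 *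
      ((205 * n ^ 2 + 250 * n + 77) / ((n : ℝ) + 1) ^ 5)) := by
    rw [wzG, wzPoly, Nat.factorial_succ n]
    simp only [add_zero]
    push_cast
    field_simp
    ring
  rw [heq, abs_mul, abs_pow, abs_neg, abs_one, one_pow, one_mul, abs_of_nonneg (by positivity)]
  calc _ ≤ 1 ^ 5 * (532 * ((n : ℝ) + 1) ^ 2 / ((n : ℝ) + 1) ^ 5) := by
        gcongr
        · exact div_le_one_of_le₀ hq (by positivity)
        · nlinarith
    _ = _ := by field_simp

lemma hasSum_wzG : HasSum (fun n => wzG n 0) (∑' k, wzF 0 k) := by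
  have hs : Summable fun n => wzG n 0 := .of_norm_bounded
    ((summable_one_div_succ_pow (by norm_num : 1 < 3)).mul_left 532) abs_wzG_zero_le
  exact tendsto_nhds_unique hs.hasSum.tendsto_sum_nat tendsto_sum_wzG ▸ hs.hasSum

end AperyZetaThree

/-- `∑_{n≥1} (−1/2^10)^n (1)ₙ^5/(1/2)ₙ^5 (205n²−160n+32)/n^5 = −2ζ(3)`. -/
theorem apery_zeta3_series :
    ∑' n : ℕ, ((((-1 / 2 ^ 10 : ℝ) ^ (n + 1) * (risingFactorial 1 (n + 1)) ^ 5 /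
        (risingFactorial (1 / 2) (n + 1)) ^ 5 *
        (205 * ((n : ℝ) + 1) ^ 2 - 160 * ((n : ℝ) + 1) + 32) / ((n : ℝ) + 1) ^ 5 : ℝ)) : ℂ)
      = -2 * riemannZeta 3 := by
  rw [← Complex.ofReal_tsum, tsum_congr AperyZetaThree.term_eq_neg_wzG,
    AperyZetaThree.hasSum_wzG.neg.tsum_eq, Complex.ofReal_neg,
    AperyZetaThree.ofReal_tsum_wzF_zero, neg_mul]
end

section
/- The series identity ∑_{n≥1} (−2^10/5^5)^n · ((1)_n)^9 / ( ((1/2)_n)^5 (1/5)_n (2/5)_n (3/5)_n (4/5)_n ) · (30 − 425n + 2275n² − 5600n³ + 5532n⁴)/n^9 = −380928 ζ(5) holds, where ζ is the Riemann zeta function. -/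
open Filter Topology MeasureTheory

/-- The ratio `F(N, ν) / F(N - 1, ν)` of the first function `F` of the WZ pair. -/
noncomputable def kernelRatio (N ν : ℂ) : ℂ :=
  -128 * N ^ 6 / ((2 * N - 1) * (5 * N) * (5 * N - 1) * (5 * N - 2) * (5 * N - 3) * (5 * N - 4)) *
    (((N - 1) ^ 2 - 4 * ν ^ 2) * ((2 * N - 3 / 2) ^ 2 - ν ^ 2) * ((2 * N - 1 / 2) ^ 2 - ν ^ 2)) /
      (N ^ 2 - ν ^ 2) ^ 3

/-- The first function `F` of the WZ pair. -/
noncomputable def wzF : ℕ → ℂ → ℂ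
  | 0, ν => -2048 / ν ^ 3
  | n + 1, ν => wzF n ν * kernelRatio (n + 1) ν

/-- The ratio of consecutive values of `mateCore`. -/
noncomputable def mateRatio (N μ : ℂ) : ℂ :=
  -128 * N ^ 5 / (5 * (5 * N + 1) * (5 * N + 2) * (5 * N + 3) * (5 * N + 4) * (2 * N + 1)) *
    ((N ^ 2 - 4 * μ ^ 2) * ((2 * N - 1) ^ 2 - μ ^ 2) * ((2 * N) ^ 2 - μ ^ 2)) /
      ((N + 1 / 2) ^ 2 - μ ^ 2) ^ 3

/-- The product of the ratios `mateRatio`: the hypergeometric part of `wzG`. -/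
noncomputable def mateCore : ℕ → ℂ → ℂ
  | 0, _ => -64 / 15
  | n + 1, μ => mateCore n μ * mateRatio (n + 1) μ

/-- The polynomial part of `wzG`; the variable `s` stands for `μ ^ 2`. -/
noncomputable def matePoly (N s : ℂ) : ℂ :=
  (30 - 425 * N + 2275 * N ^ 2 - 5600 * N ^ 3 + 5532 * N ^ 4) * (2 * N - 1) ^ 2 +
    (-240 + 3160 * N - 15048 * N ^ 2 + 30592 * N ^ 3 - 22944 * N ^ 4) * s +
    (7728 * N ^ 2 - 3920 * N + 480) * s ^ 2

/-- The second function `G` of the WZ pair, an even function of `μ`. -/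
noncomputable def wzG (n : ℕ) (μ : ℂ) : ℂ :=
  μ ^ 2 * (mateCore n μ * matePoly (n + 1) (μ ^ 2)) / (1 / 4 - μ ^ 2) ^ 3

/-- The WZ certificate `G(n, μ) / F(n, μ + 1/2)` at `n = N - 1`, up to the factor `matePoly`. -/
noncomputable def certBase (N μ : ℂ) : ℂ :=
  -(1 / 80) / ((2 * N - 1) * (5 * N - 4) * (5 * N - 3) * (5 * N - 2) * (5 * N - 1)) *
    ((N - 2 - 2 * μ) * (N - 1 - 2 * μ) * (2 * N - 2 - μ)) / ((μ + 1 / 2) * (N - 1 / 2 - μ) ^ 3)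

/-- `μ` is not a half-integer, so that the WZ pair has no poles at `μ`. -/
def NotHalfInt (μ : ℂ) : Prop := ∀ k : ℤ, μ ≠ k + 1 / 2

theorem NotHalfInt.two_mul_add_odd_ne_zero {μ : ℂ} (h : NotHalfInt μ) (k : ℤ) :
    2 * μ + (2 * k + 1) ≠ 0 := by
  intro h0
  apply h (-k - 1)
  push_cast
  linear_combination h0 / 2

theorem affine_natCast_ne_zero (n a b : ℕ) (hb : b ≠ 0) : (a * (n : ℂ) + b) ≠ 0 := by
  have : a * n + b ≠ 0 := by omega
  exact_mod_cast this

theorem certBase_mul_mateRatio (n : ℕ) {μ : ℂ} (h : NotHalfInt μ) :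
    certBase (n + 1) μ * mateRatio (n + 1) μ =
      kernelRatio (n + 1) (μ + 1 / 2) * certBase (n + 2) μ := by
  have h1 := h.two_mul_add_odd_ne_zero 0
  have h2 := h.two_mul_add_odd_ne_zero (n + 1)
  have h3 := h.two_mul_add_odd_ne_zero (-(n + 1))
  have h4 := h.two_mul_add_odd_ne_zero (-(n + 2))
  push_cast at h1 h2 h3 h4
  have d1 := affine_natCast_ne_zero n 2 1 (by simp)
  have d2 := affine_natCast_ne_zero n 5 1 (by simp)
  have d3 := affine_natCast_ne_zero n 5 2 (by simp)
  have d4 := affine_natCast_ne_zero n 5 3 (by simp)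
  have d5 := affine_natCast_ne_zero n 5 4 (by simp)
  have d6 := affine_natCast_ne_zero n 5 6 (by simp)
  have d7 := affine_natCast_ne_zero n 5 7 (by simp)
  have d8 := affine_natCast_ne_zero n 5 8 (by simp)
  have d9 := affine_natCast_ne_zero n 5 9 (by simp)
  have d10 := affine_natCast_ne_zero n 2 3 (by simp)
  have d11 := affine_natCast_ne_zero n 1 1 (by simp)
  push_cast at d1 d2 d3 d4 d5 d6 d7 d8 d9 d10 d11
  unfold certBase mateRatio kernelRatio
  generalize (n : ℂ) = x at *
  have e1 : 2 * (x + 1) - 1 = 2 * x + 1 := by ring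
  have e2 : 5 * (x + 1) - 4 = 5 * x + 1 := by ring
  have e3 : 5 * (x + 1) - 3 = 5 * x + 2 := by ring
  have e4 : 5 * (x + 1) - 2 = 5 * x + 3 := by ring
  have e5 : 5 * (x + 1) - 1 = 5 * x + 4 := by ring
  have e6 : 5 * (x + 1) + 1 = 5 * x + 6 := by ring
  have e7 : 5 * (x + 1) + 2 = 5 * x + 7 := by ring
  have e8 : 5 * (x + 1) + 3 = 5 * x + 8 := by ring
  have e9 : 5 * (x + 1) + 4 = 5 * x + 9 := by ring
  have e10 : 2 * (x + 1) + 1 = 2 * x + 3 := by ring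
  have e11 : 2 * (x + 2) - 1 = 2 * x + 3 := by ring
  have e12 : 5 * (x + 2) - 4 = 5 * x + 6 := by ring
  have e13 : 5 * (x + 2) - 3 = 5 * x + 7 := by ring
  have e14 : 5 * (x + 2) - 2 = 5 * x + 8 := by ring
  have e15 : 5 * (x + 2) - 1 = 5 * x + 9 := by ring
  have e16 : x + 1 - 1 / 2 - μ = -(2 * μ + (2 * -(x + 1) + 1)) / 2 := by ring
  have e17 : (x + 1 + 1 / 2) ^ 2 - μ ^ 2 =
      -((2 * μ + (2 * -(x + 2) + 1)) * (2 * μ + (2 * (x + 1) + 1))) / 4 := by ring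
  have e18 : (x + 1) ^ 2 - (μ + 1 / 2) ^ 2 =
      -((2 * μ + (2 * -(x + 1) + 1)) * (2 * μ + (2 * (x + 1) + 1))) / 4 := by ring
  have e19 : x + 2 - 1 / 2 - μ = -(2 * μ + (2 * -(x + 2) + 1)) / 2 := by ring
  have e20 : μ + 1 / 2 = (2 * μ + (2 * 0 + 1)) / 2 := by ring
  have hn : (x + 1 - 2 - 2 * μ) * (x + 1 - 1 - 2 * μ) * (2 * (x + 1) - 2 - μ) *
      (((x + 1) ^ 2 - 4 * μ ^ 2) * ((2 * (x + 1) - 1) ^ 2 - μ ^ 2) * ((2 * (x + 1)) ^ 2 - μ ^ 2)) =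
      ((x + 1 - 1) ^ 2 - 4 * (μ + 1 / 2) ^ 2) * ((2 * (x + 1) - 3 / 2) ^ 2 - (μ + 1 / 2) ^ 2) *
        ((2 * (x + 1) - 1 / 2) ^ 2 - (μ + 1 / 2) ^ 2) *
      ((x + 2 - 2 - 2 * μ) * (x + 2 - 1 - 2 * μ) * (2 * (x + 2) - 2 - μ)) := by ring
  rw [e1] at hn ⊢
  rw [e16, e17, e18, e19, e2, e3, e4, e5, e6, e7, e8, e9, e11, e12, e13, e14, e15]
  rw [one_mul] at d11
  generalize (x + 1 - 2 - 2 * μ) * (x + 1 - 1 - 2 * μ) * (2 * (x + 1) - 2 - μ) = n₁ at *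
  generalize ((x + 1) ^ 2 - 4 * μ ^ 2) * ((2 * x + 1) ^ 2 - μ ^ 2) *
    ((2 * (x + 1)) ^ 2 - μ ^ 2) = n₂ at *
  generalize ((x + 1 - 1) ^ 2 - 4 * (μ + 1 / 2) ^ 2) *
    ((2 * (x + 1) - 3 / 2) ^ 2 - (μ + 1 / 2) ^ 2) *
      ((2 * (x + 1) - 1 / 2) ^ 2 - (μ + 1 / 2) ^ 2) = n₃ at *
  generalize (x + 2 - 2 - 2 * μ) * (x + 2 - 1 - 2 * μ) * (2 * (x + 2) - 2 - μ) = n₄ at *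
  generalize 2 * μ + (2 * -(x + 1) + 1) = A at *
  generalize 2 * μ + (2 * -(x + 2) + 1) = B at *
  generalize 2 * μ + (2 * (x + 1) + 1) = C at *
  rw [e20, e10]
  generalize 2 * μ + (2 * 0 + 1) = D at *
  generalize 5 * x + 1 = y₁ at *
  generalize 5 * x + 2 = y₂ at *
  generalize 5 * x + 3 = y₃ at *
  generalize 5 * x + 4 = y₄ at *
  generalize 5 * x + 6 = y₆ at *
  generalize 5 * x + 7 = y₇ at *
  generalize 5 * x + 8 = y₈ at *
  generalize 5 * x + 9 = y₉ at *
  generalize 2 * x + 1 = z₁ at *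
  generalize 2 * x + 3 = z₃ at *
  generalize x + 1 = X at *
  field_simp
  linear_combination hn

theorem sq_mul_mateCore_div (n : ℕ) {μ : ℂ} (h : NotHalfInt μ) :
    μ ^ 2 * mateCore n μ / (1 / 4 - μ ^ 2) ^ 3 = wzF n (μ + 1 / 2) * certBase (n + 1) μ := by
  induction n with
  | zero =>
    have h1 := h.two_mul_add_odd_ne_zero 0
    have h2 := h.two_mul_add_odd_ne_zero (-1)
    push_cast at h1 h2
    simp only [mateCore, wzF, certBase]
    have e1 : 1 / 4 - μ ^ 2 = -((2 * μ + (2 * 0 + 1)) * (2 * μ + (2 * -1 + 1))) / 4 := by ring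
    have e2 : ((0 : ℕ) : ℂ) + 1 - 1 / 2 - μ = -(2 * μ + (2 * -1 + 1)) / 2 := by push_cast; ring
    have e3 : μ + 1 / 2 = (2 * μ + (2 * 0 + 1)) / 2 := by ring
    rw [e1, e2, e3]
    generalize hA : 2 * μ + (2 * 0 + 1) = A at *
    generalize hB : 2 * μ + (2 * -1 + 1) = B at *
    push_cast
    field_simp
    subst hA
    ring
  | succ n ih =>
    have := certBase_mul_mateRatio n h
    simp only [mateCore, wzF]
    push_cast
    calc _ = (μ ^ 2 * mateCore n μ / (1 / 4 - μ ^ 2) ^ 3) * mateRatio (n + 1) μ := by ring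
      _ = _ := by
        rw [ih, mul_assoc, this, show (n : ℂ) + 1 + 1 = n + 2 by ring]; ring

theorem kernelRatio_sub_one (n : ℕ) {μ : ℂ} (h : NotHalfInt μ) :
    kernelRatio (n + 1) (μ + 1 / 2) - 1 =
      -(certBase (n + 1) (-1 - μ) * matePoly (n + 1) ((-1 - μ) ^ 2)) -
        certBase (n + 1) μ * matePoly (n + 1) (μ ^ 2) := by
  have h1 := h.two_mul_add_odd_ne_zero 0
  have h2 := h.two_mul_add_odd_ne_zero (n + 1)
  have h3 := h.two_mul_add_odd_ne_zero (-(n + 1))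
  push_cast at h1 h2 h3
  have d1 := affine_natCast_ne_zero n 2 1 (by simp)
  have d2 := affine_natCast_ne_zero n 5 1 (by simp)
  have d3 := affine_natCast_ne_zero n 5 2 (by simp)
  have d4 := affine_natCast_ne_zero n 5 3 (by simp)
  have d5 := affine_natCast_ne_zero n 5 4 (by simp)
  have d11 := affine_natCast_ne_zero n 1 1 (by simp)
  push_cast at d1 d2 d3 d4 d5 d11
  unfold certBase kernelRatio matePoly
  generalize (n : ℂ) = x at *
  have e1 : 2 * (x + 1) - 1 = 2 * x + 1 := by ring
  have e2 : 5 * (x + 1) - 4 = 5 * x + 1 := by ring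
  have e3 : 5 * (x + 1) - 3 = 5 * x + 2 := by ring
  have e4 : 5 * (x + 1) - 2 = 5 * x + 3 := by ring
  have e5 : 5 * (x + 1) - 1 = 5 * x + 4 := by ring
  have e16 : x + 1 - 1 / 2 - μ = -(2 * μ + (2 * -(x + 1) + 1)) / 2 := by ring
  have e17 : x + 1 - 1 / 2 - (-1 - μ) = (2 * μ + (2 * (x + 1) + 1)) / 2 := by ring
  have e18 : (x + 1) ^ 2 - (μ + 1 / 2) ^ 2 =
      -((2 * μ + (2 * -(x + 1) + 1)) * (2 * μ + (2 * (x + 1) + 1))) / 4 := by ring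
  have e19 : -1 - μ + 1 / 2 = -(2 * μ + (2 * 0 + 1)) / 2 := by ring
  have e20 : μ + 1 / 2 = (2 * μ + (2 * 0 + 1)) / 2 := by ring
  have hq : (2 * x + 1) * (5 * x + 1) * (5 * x + 2) * (5 * x + 3) * (5 * x + 4) ≠ 0 := by
    simp [*]
  have e21 : (2 * x + 1) * (5 * (x + 1)) * (5 * x + 4) * (5 * x + 3) * (5 * x + 2) * (5 * x + 1) =
    5 * (x + 1) * ((2 * x + 1) * (5 * x + 1) * (5 * x + 2) * (5 * x + 3) * (5 * x + 4)) := by ring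
  rw [e16, e17, e18, e19, e1, e2, e3, e4, e5, e21]
  rw [one_mul] at d11
  generalize hA : 2 * μ + (2 * -(x + 1) + 1) = A at *
  generalize hC : 2 * μ + (2 * (x + 1) + 1) = C at *
  generalize hQ : (2 * x + 1) * (5 * x + 1) * (5 * x + 2) * (5 * x + 3) * (5 * x + 4) = Q at *
  rw [e20]
  generalize hD : 2 * μ + (2 * 0 + 1) = D at *
  generalize hX : x + 1 = X at *
  generalize hp1 : (30 - 425 * X + 2275 * X ^ 2 - 5600 * X ^ 3 + 5532 * X ^ 4) * (2 * x + 1) ^ 2 +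
    (-240 + 3160 * X - 15048 * X ^ 2 + 30592 * X ^ 3 - 22944 * X ^ 4) * μ ^ 2 +
    (7728 * X ^ 2 - 3920 * X + 480) * (μ ^ 2) ^ 2 = p1
  generalize hp2 : (30 - 425 * X + 2275 * X ^ 2 - 5600 * X ^ 3 + 5532 * X ^ 4) * (2 * x + 1) ^ 2 +
    (-240 + 3160 * X - 15048 * X ^ 2 + 30592 * X ^ 3 - 22944 * X ^ 4) * (-1 - μ) ^ 2 +
    (7728 * X ^ 2 - 3920 * X + 480) * ((-1 - μ) ^ 2) ^ 2 = p2
  generalize hk : ((X - 1) ^ 2 - 4 * (D / 2) ^ 2) * ((2 * X - 3 / 2) ^ 2 - (D / 2) ^ 2) *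
    ((2 * X - 1 / 2) ^ 2 - (D / 2) ^ 2) = k
  generalize hr1 : (X - 2 - 2 * μ) * (X - 1 - 2 * μ) * (2 * X - 2 - μ) = r1
  generalize hr2 : (X - 2 - 2 * (-1 - μ)) * (X - 1 - 2 * (-1 - μ)) * (2 * X - 2 - (-1 - μ)) = r2
  field_simp
  subst hp1 hp2 hk hr1 hr2 hA hC hD hQ hX
  ring

theorem mateCore_neg (n : ℕ) (μ : ℂ) : mateCore n (-μ) = mateCore n μ := by
  induction n with
  | zero => rfl
  | succ n ih => simp only [mateCore, mateRatio, ih, neg_sq]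

theorem wzF_neg (n : ℕ) (ν : ℂ) : wzF n (-ν) = -wzF n ν := by
  induction n with
  | zero => simp only [wzF, Odd.neg_pow (by decide : Odd 3), div_neg]
  | succ n ih => simp only [wzF, kernelRatio, ih, neg_sq, neg_mul]

theorem wzG_neg (n : ℕ) (μ : ℂ) : wzG n (-μ) = wzG n μ := by
  simp only [wzG, mateCore_neg, neg_sq]

theorem wzG_eq (n : ℕ) {μ : ℂ} (h : NotHalfInt μ) :
    wzG n μ = wzF n (μ + 1 / 2) * certBase (n + 1) μ * matePoly (n + 1) (μ ^ 2) := by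
  rw [← sq_mul_mateCore_div n h, wzG]
  ring

theorem NotHalfInt.neg_one_sub {μ : ℂ} (h : NotHalfInt μ) : NotHalfInt (-1 - μ) := by
  intro k hk
  apply h (-k - 2)
  push_cast
  linear_combination -hk

/-- The WZ pair relation. -/
theorem wzF_succ_sub (n : ℕ) {μ : ℂ} (h : NotHalfInt μ) :
    wzF (n + 1) (μ + 1 / 2) - wzF n (μ + 1 / 2) = wzG n (μ + 1) - wzG n μ := by
  have h1 : wzG n (μ + 1) = -wzF n (μ + 1 / 2) * certBase (n + 1) (-1 - μ) *
      matePoly (n + 1) ((-1 - μ) ^ 2) := by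
    rw [← wzG_neg, show -(μ + 1) = -1 - μ by ring, wzG_eq n h.neg_one_sub,
      show -1 - μ + 1 / 2 = -(μ + 1 / 2) by ring, wzF_neg]
  rw [h1, wzG_eq n h, wzF]
  linear_combination wzF n (μ + 1 / 2) * kernelRatio_sub_one n h

theorem wzF_sub_zero (n : ℕ) {μ : ℂ} (h : NotHalfInt μ) :
    wzF n (μ + 1 / 2) - wzF 0 (μ + 1 / 2) =
      ∑ k ∈ Finset.range n, wzG k (μ + 1) - ∑ k ∈ Finset.range n, wzG k μ := by
  rw [← Finset.sum_sub_distrib, ← Finset.sum_range_sub fun k => wzF k (μ + 1 / 2)]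
  exact Finset.sum_congr rfl fun k _ => wzF_succ_sub k h

/-- The continuation of `μ cot (π μ) / (1/4 - μ²)` that is holomorphic in the strip `|re μ| < 1`. -/
noncomputable def cotKernel (μ : ℂ) : ℂ :=
  Complex.Gamma (1 + μ) * Complex.Gamma (1 - μ) *
    ((Complex.Gamma (3 / 2 + μ))⁻¹ * (Complex.Gamma (3 / 2 - μ))⁻¹)

theorem cotKernel_neg (μ : ℂ) : cotKernel (-μ) = cotKernel μ := by
  simp only [cotKernel, sub_neg_eq_add, ← sub_eq_add_neg]
  ring

theorem differentiableOn_cotKernel : DifferentiableOn ℂ cotKernel {μ | |μ.re| < 1} := by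
  intro μ hμ
  rw [Set.mem_ofPred_eq, abs_lt] at hμ
  apply DifferentiableAt.differentiableWithinAt
  have aux : ∀ s : ℂ, 0 < s.re → DifferentiableAt ℂ Complex.Gamma s := by
    intro s hs
    refine Complex.differentiableAt_Gamma s fun m hm => ?_
    rw [hm] at hs
    simp at hs
    linarith [m.cast_nonneg (α := ℝ)]
  have h1 : DifferentiableAt ℂ (fun μ => Complex.Gamma (1 + μ)) μ :=
    (aux (1 + μ) (by simp; linarith)).comp μ (by fun_prop)
  have h2 : DifferentiableAt ℂ (fun μ => Complex.Gamma (1 - μ)) μ :=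
    (aux (1 - μ) (by simp; linarith)).comp μ (by fun_prop)
  have h3 : DifferentiableAt ℂ (fun μ => (Complex.Gamma (3 / 2 + μ))⁻¹) μ :=
    (Complex.differentiable_one_div_Gamma (3 / 2 + μ)).comp μ (by fun_prop)
  have h4 : DifferentiableAt ℂ (fun μ => (Complex.Gamma (3 / 2 - μ))⁻¹) μ :=
    (Complex.differentiable_one_div_Gamma (3 / 2 - μ)).comp μ (by fun_prop)
  exact (h1.mul h2).mul (h3.mul h4)

theorem cotKernel_zero : cotKernel 0 = 4 / Real.pi := by
  have h1 : Complex.Gamma (1 / 2) * Complex.Gamma (1 / 2) = Real.pi := by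
    have := Complex.Gamma_mul_Gamma_one_sub (1 / 2)
    rw [show (1 : ℂ) - 1 / 2 = 1 / 2 by norm_num, show (Real.pi : ℂ) * (1 / 2) = Real.pi / 2 by ring,
      Complex.sin_pi_div_two, div_one] at this
    exact this
  have h2 : Complex.Gamma (3 / 2) = 1 / 2 * Complex.Gamma (1 / 2) := by
    rw [← Complex.Gamma_add_one _ (by norm_num)]
    norm_num
  simp only [cotKernel, add_zero, sub_zero, Complex.Gamma_one, one_mul]
  rw [← mul_inv, h2, show (1 / 2 * Complex.Gamma (1 / 2) * (1 / 2 * Complex.Gamma (1 / 2))) =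
    1 / 4 * (Complex.Gamma (1 / 2) * Complex.Gamma (1 / 2)) by ring, h1]
  field_simp

theorem quarter_sub_sq_ne_zero {μ : ℂ} (hμ : μ.im ≠ 0) : 1 / 4 - μ ^ 2 ≠ 0 := by
  have h1 : 1 / 2 + μ ≠ 0 := fun h => hμ (by simpa using congrArg Complex.im h)
  have h2 : 1 / 2 - μ ≠ 0 := fun h => hμ (by simpa using congrArg Complex.im h)
  rw [show 1 / 4 - μ ^ 2 = (1 / 2 + μ) * (1 / 2 - μ) by ring]
  exact mul_ne_zero h1 h2

theorem cotKernel_eq {μ : ℂ} (hμ : μ.im ≠ 0) :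
    cotKernel μ = μ * Complex.cot (Real.pi * μ) / (1 / 4 - μ ^ 2) := by
  have h0 : μ ≠ 0 := fun h => hμ (by simp [h])
  have h1 : 1 / 2 + μ ≠ 0 := fun h => hμ (by simpa using congrArg Complex.im h)
  have h2 : 1 / 2 - μ ≠ 0 := fun h => hμ (by simpa using congrArg Complex.im h)
  have g1 : Complex.Gamma (1 + μ) * Complex.Gamma (1 - μ) =
      μ * (Real.pi / Complex.sin (Real.pi * μ)) := by
    rw [← Complex.Gamma_mul_Gamma_one_sub, add_comm, Complex.Gamma_add_one _ h0, mul_assoc]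
  have g2 : Complex.Gamma (3 / 2 + μ) * Complex.Gamma (3 / 2 - μ) =
      (1 / 4 - μ ^ 2) * (Real.pi / Complex.cos (Real.pi * μ)) := by
    have := Complex.Gamma_mul_Gamma_one_sub (1 / 2 + μ)
    rw [show (Real.pi : ℂ) * (1 / 2 + μ) = Real.pi * μ + Real.pi / 2 by ring,
      Complex.sin_add_pi_div_two, show 1 - (1 / 2 + μ) = 1 / 2 - μ by ring] at this
    rw [← this, show 3 / 2 + μ = 1 / 2 + μ + 1 by ring, show 3 / 2 - μ = 1 / 2 - μ + 1 by ring,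
      Complex.Gamma_add_one _ h1, Complex.Gamma_add_one _ h2]
    ring
  rw [cotKernel, ← mul_inv, g1, g2, Complex.cot_eq_cos_div_sin, mul_inv, inv_div]
  have hpi : (Real.pi : ℂ) ≠ 0 := by exact_mod_cast Real.pi_ne_zero
  calc _ = μ * (Complex.cos (Real.pi * μ) / Complex.sin (Real.pi * μ)) * (1 / 4 - μ ^ 2)⁻¹ *
        (Real.pi / Real.pi) := by ring
    _ = _ := by rw [div_self hpi]; ring

theorem cot_pi_mul_half_add (y : ℝ) :
    Complex.cot (Real.pi * (1 / 2 + y * Complex.I)) =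
      -Complex.I * (Real.tanh (Real.pi * y) : ℝ) := by
  rw [Complex.cot_eq_cos_div_sin,
    show (Real.pi : ℂ) * (1 / 2 + y * Complex.I) = Real.pi * y * Complex.I + Real.pi / 2 by ring,
    Complex.cos_add_pi_div_two, Complex.sin_add_pi_div_two, neg_div,
    ← Complex.tan_eq_sin_div_cos, Complex.tan_mul_I]
  push_cast
  ring

theorem tendsto_cot_pi_mul :
    Tendsto (fun μ : ℂ => Complex.cot (Real.pi * μ)) (comap Complex.im atTop) (𝓝 (-Complex.I)) := by
  have h : Tendsto (fun μ : ℂ => Complex.exp (2 * Complex.I * (Real.pi * μ)))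
      (comap Complex.im atTop) (𝓝 0) := by
    rw [Complex.tendsto_exp_nhds_zero_iff]
    have : ∀ μ : ℂ, (2 * Complex.I * (Real.pi * μ)).re = -(2 * Real.pi) * μ.im := by
      intro μ; simp; ring
    simp only [this]
    exact tendsto_comap.const_mul_atTop_of_neg (by linarith [Real.pi_pos])
  simp only [Complex.cot_eq_exp_ratio]
  have := (h.add_const 1).div ((h.const_sub 1).const_mul Complex.I) (by simp)
  simp only [zero_add, sub_zero, mul_one, one_div, Complex.inv_I] at this
  exact this

theorem tanh_nonneg {x : ℝ} (hx : 0 ≤ x) : 0 ≤ Real.tanh x := by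
  rw [Real.tanh_eq_sinh_div_cosh]
  exact div_nonneg (Real.sinh_nonneg_iff.2 hx) (Real.cosh_pos _).le

/-- Let `f μ = μ² σ μ / (1/4 - μ²)³` with `σ` even and holomorphic in the strip `|re μ| < 1`, and
suppose `f` tends to `l` at infinity. Integrating `f μ * cot (π μ) ^ 3`, whose only pole in the closed
strip `|re μ| ≤ 1/2` is at `0`, along the boundary of that strip bounds the residue by the jump of
`f` between the conjugate points of the line `re μ = 1/2`. -/
theorem norm_le_of_strip {σ f : ℂ → ℂ} {l : ℂ} {ε : ℝ}
    (hσ : DifferentiableOn ℂ σ {μ | |μ.re| < 1}) (heven : ∀ μ, σ (-μ) = σ μ)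
    (hf : ∀ μ, f μ = μ ^ 2 * σ μ / (1 / 4 - μ ^ 2) ^ 3)
    (hlim : Tendsto f (cocompact ℂ) (𝓝 l))
    (hbd : ∀ y : ℝ, 0 < y → ‖f (1 / 2 + y * Complex.I) - f (1 / 2 - y * Complex.I)‖ *
      Real.tanh (Real.pi * y) ^ 3 ≤ ε / (1 + y ^ 2)) :
    ‖64 * σ 0 / Real.pi ^ 2 + l‖ ≤ 2 * ε := by
  set ψ : ℂ → ℂ := fun μ => σ μ * cotKernel μ ^ 3 with hψ
  set q : ℂ → ℂ := dslope ψ 0 with hq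
  have hU : IsOpen {μ : ℂ | |μ.re| < 1} :=
    isOpen_lt (Complex.continuous_re.abs) continuous_const
  have hqd : DifferentiableOn ℂ q {μ : ℂ | |μ.re| < 1} :=
    (Complex.differentiableOn_dslope (hU.mem_nhds (by simp))).2
      (hσ.mul (differentiableOn_cotKernel.pow 3))
  have hψneg : ∀ μ, ψ (-μ) = ψ μ := fun μ => by simp only [hψ, heven, cotKernel_neg]
  have hqodd : ∀ μ, q (-μ) = -q μ := by
    intro μ
    by_cases h : μ = 0
    · have := deriv_comp_neg ψ 0
      simp only [hψneg, neg_zero] at this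
      rw [h, neg_zero, hq, dslope_same]
      exact this
    · rw [hq, dslope_of_ne _ h, dslope_of_ne _ (neg_ne_zero.2 h), slope_def_field, slope_def_field,
        hψneg]
      ring
  have hψ0 : ψ 0 = 64 * σ 0 / Real.pi ^ 3 := by
    simp only [hψ, cotKernel_zero]; ring
  have hqf : ∀ μ : ℂ, μ.im ≠ 0 → q μ = f μ * Complex.cot (Real.pi * μ) ^ 3 - ψ 0 / μ := by
    intro μ hμ
    have h0 : μ ≠ 0 := fun h => hμ (by simp [h])
    have h1 := quarter_sub_sq_ne_zero hμ
    rw [hq, dslope_of_ne _ h0, slope_def_field, sub_zero, sub_div, hf]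
    congr 1
    simp only [hψ, cotKernel_eq hμ]
    field_simp
  have hqlim : Tendsto q (comap Complex.im atTop) (𝓝 (Complex.I * l)) := by
    have hcc : comap Complex.im atTop ≤ cocompact ℂ := by
      rw [← Metric.cobounded_eq_cocompact, ← comap_norm_atTop, ← tendsto_iff_comap]
      refine tendsto_atTop_mono (fun μ => ?_) tendsto_comap
      exact (le_abs_self _).trans (Complex.abs_im_le_norm μ)
    have h1 := ((hlim.mono_left hcc).mul (tendsto_cot_pi_mul.pow 3)).sub
      ((tendsto_inv₀_cobounded.mono_left
        (hcc.trans (Metric.cobounded_eq_cocompact).ge)).const_mul (ψ 0))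
    have h2 : l * (-Complex.I) ^ 3 - ψ 0 * 0 = Complex.I * l := by
      rw [Odd.neg_pow (by decide), Complex.I_pow_three]; ring
    rw [h2] at h1
    refine h1.congr' ?_
    have : ∀ᶠ μ : ℂ in comap Complex.im atTop, 0 < μ.im :=
      tendsto_comap.eventually (eventually_gt_atTop 0)
    filter_upwards [this] with μ hμ
    rw [hqf μ hμ.ne']
    rfl
  have hcont : ∀ g : ℝ → ℂ, Continuous g → (∀ t, |(g t).re| < 1) → Continuous fun t => q (g t) :=
    fun g hg h => hqd.continuousOn.comp_continuous hg h
  have hcR : Continuous fun y : ℝ => q (1 / 2 + y * Complex.I) :=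
    hcont _ (by fun_prop) fun t => by norm_num
  have hcL : Continuous fun y : ℝ => q (1 / 2 - y * Complex.I) :=
    hcont _ (by fun_prop) fun t => by norm_num
  have hrect : ∀ Y : ℝ, 0 < Y →
      ∫ y in (0 : ℝ)..Y, (q (1 / 2 + y * Complex.I) + q (1 / 2 - y * Complex.I)) =
        -Complex.I * ∫ x in (-(1 / 2) : ℝ)..(1 / 2), q (x + Y * Complex.I) := by
    intro Y hY
    have h := Complex.integral_boundary_rect_eq_zero_of_differentiableOn q (-(1 / 2 : ℝ) : ℂ)
      ((1 / 2 : ℝ) + Y * Complex.I) (hqd.mono ?_)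
    · have hbot : ∫ x in (-(1 / 2) : ℝ)..(1 / 2), q x = 0 := by
        have h1 := intervalIntegral.integral_comp_neg (a := -(1 / 2)) (b := 1 / 2)
          (fun x : ℝ => q x)
        simp only [Complex.ofReal_neg, hqodd, neg_neg, intervalIntegral.integral_neg] at h1
        exact self_eq_neg.1 h1.symm
      have hleft : ∀ y : ℝ, q (-2⁻¹ + y * Complex.I) = -q (2⁻¹ - y * Complex.I) := by
        intro y; rw [← hqodd]; ring_nf
      rw [intervalIntegral.integral_add (hcR.intervalIntegrable _ _) (hcL.intervalIntegrable _ _)]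
      simp at h hbot ⊢
      simp only [hleft, intervalIntegral.integral_neg] at h
      rw [hbot] at h
      linear_combination -Complex.I * h + ((∫ y in (0 : ℝ)..Y, q (2⁻¹ + y * Complex.I)) +
        ∫ y in (0 : ℝ)..Y, q (2⁻¹ - y * Complex.I)) * Complex.I_sq
    · intro μ hμ
      rw [Complex.mem_reProdIm] at hμ
      have := hμ.1
      simp at this
      rw [Set.mem_ofPred_eq, abs_lt]
      constructor <;> linarith
  have htop : Tendsto (fun Y : ℝ => ∫ x in (-(1 / 2) : ℝ)..(1 / 2), q (x + Y * Complex.I)) atTop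
      (𝓝 (Complex.I * l)) := by
    rw [Metric.tendsto_atTop]
    intro δ hδ
    have h1 : ∀ᶠ μ in comap Complex.im atTop, dist (q μ) (Complex.I * l) < δ / 2 :=
      hqlim.eventually (Metric.ball_mem_nhds _ (by positivity))
    rw [eventually_comap] at h1
    obtain ⟨Y₀, hY₀⟩ := eventually_atTop.1 h1
    refine ⟨Y₀, fun Y hY => ?_⟩
    have h2 : (∫ x in (-(1 / 2) : ℝ)..(1 / 2), q (x + Y * Complex.I)) - Complex.I * l =
        ∫ x in (-(1 / 2) : ℝ)..(1 / 2), (q (x + Y * Complex.I) - Complex.I * l) := by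
      rw [intervalIntegral.integral_sub ?_ (by simp), intervalIntegral.integral_const]
      · norm_num
      · apply ContinuousOn.intervalIntegrable
        refine hqd.continuousOn.comp (by fun_prop) fun x hx => ?_
        rw [Set.uIcc_of_le (by norm_num), Set.mem_Icc] at hx
        simp [abs_lt]
        constructor <;> linarith
    rw [dist_eq_norm, h2]
    have h3 := intervalIntegral.norm_integral_le_of_norm_le_const (a := -(1 / 2)) (b := 1 / 2)
      (C := δ / 2) (f := fun x : ℝ => q (x + Y * Complex.I) - Complex.I * l) fun x _ => by
        rw [← dist_eq_norm]
        exact (hY₀ Y hY _ (by simp)).le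
    norm_num at h3 ⊢
    linarith
  set D : ℝ → ℂ := fun y => q (1 / 2 + y * Complex.I) + q (1 / 2 - y * Complex.I) +
    ψ 0 * ((1 / 4 + y ^ 2)⁻¹ : ℝ) with hD
  have hinv : Continuous fun y : ℝ => (1 / 4 + y ^ 2)⁻¹ :=
    Continuous.inv₀ (by fun_prop) fun y => by positivity
  have hDbd : ∀ y : ℝ, 0 < y → ‖D y‖ ≤ ε * (1 + y ^ 2)⁻¹ := by
    intro y hy
    have h1 : D y = Complex.I * (Real.tanh (Real.pi * y) : ℝ) ^ 3 *
        (f (1 / 2 + y * Complex.I) - f (1 / 2 - y * Complex.I)) := by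
      have e1 := cot_pi_mul_half_add y
      have e2 := cot_pi_mul_half_add (-y)
      rw [mul_neg, Real.tanh_neg, Complex.ofReal_neg, Complex.ofReal_neg, neg_mul (y : ℂ),
        ← sub_eq_add_neg] at e2
      have d1 : (1 / 2 + y * Complex.I) ≠ 0 := fun h => hy.ne' (by simpa using congrArg Complex.im h)
      have d2 : (1 / 2 - y * Complex.I) ≠ 0 := fun h => hy.ne' (by simpa using congrArg Complex.im h)
      have d3 : ψ 0 / (1 / 2 + y * Complex.I) + ψ 0 / (1 / 2 - y * Complex.I) =
          ψ 0 * ((1 / 4 + y ^ 2)⁻¹ : ℝ) := by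
        have d4 : (1 / 2 + y * Complex.I) * (1 / 2 - y * Complex.I) = 1 / 4 + (y : ℂ) ^ 2 := by
          linear_combination -(y : ℂ) ^ 2 * Complex.I_sq
        push_cast
        rw [← d4, div_add_div _ _ d1 d2, ← div_eq_mul_inv]
        ring
      rw [hD]
      simp only
      rw [hqf _ (by simpa using hy.ne'), hqf _ (by simpa using hy.ne'), e1, e2, ← d3]
      have e3 := Complex.I_pow_three
      linear_combination (- f (1 / 2 + y * Complex.I) + f (1 / 2 - y * Complex.I)) *
        (Real.tanh (Real.pi * y) : ℂ) ^ 3 * e3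
    have htanh := tanh_nonneg (by positivity : 0 ≤ Real.pi * y)
    rw [h1, norm_mul, norm_mul, Complex.norm_I, one_mul, norm_pow, Complex.norm_real,
      Real.norm_of_nonneg htanh, mul_comm]
    exact hbd y hy
  have hDint : ∀ Y : ℝ, 0 < Y → ∫ y in (0 : ℝ)..Y, D y =
      -Complex.I * (∫ x in (-(1 / 2) : ℝ)..(1 / 2), q (x + Y * Complex.I)) +
        ψ 0 * ((2 * Real.arctan (2 * Y) : ℝ) : ℂ) := by
    intro Y hY
    have i1 : Continuous fun y : ℝ => q (1 / 2 + y * Complex.I) + q (1 / 2 - y * Complex.I) :=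
      hcR.add hcL
    have i2 : Continuous fun y : ℝ => ψ 0 * (((1 / 4 + y ^ 2)⁻¹ : ℝ) : ℂ) :=
      continuous_const.mul (Complex.continuous_ofReal.comp hinv)
    rw [← hrect Y hY, hD, intervalIntegral.integral_add (i1.intervalIntegrable _ _)
      (i2.intervalIntegrable _ _),
      intervalIntegral.integral_const_mul, intervalIntegral.integral_ofReal]
    congr 3
    have h1 : ∀ y : ℝ, (1 / 4 + y ^ 2)⁻¹ = 4 * (1 + (2 * y) ^ 2)⁻¹ := by
      intro y
      rw [show 1 + (2 * y) ^ 2 = 4 * (1 / 4 + y ^ 2) by ring, mul_inv, ← mul_assoc]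
      norm_num
    simp_rw [h1]
    rw [intervalIntegral.integral_const_mul,
      intervalIntegral.integral_comp_mul_left (fun y => (1 + y ^ 2)⁻¹) two_ne_zero,
      integral_inv_one_add_sq]
    simp
    ring
  have hDlim : Tendsto (fun Y : ℝ => ∫ y in (0 : ℝ)..Y, D y) atTop
      (𝓝 (64 * σ 0 / Real.pi ^ 2 + l)) := by
    have ha : Tendsto (fun Y : ℝ => 2 * Real.arctan (2 * Y)) atTop (𝓝 (2 * (Real.pi / 2))) :=
      ((Real.tendsto_arctan_atTop.mono_right nhdsWithin_le_nhds).comp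
        (tendsto_id.const_mul_atTop two_pos)).const_mul 2
    have h1 := (htop.const_mul (-Complex.I)).add
      (((Complex.continuous_ofReal.tendsto _).comp ha).const_mul (ψ 0))
    have h2 : -Complex.I * (Complex.I * l) + ψ 0 * ((2 * (Real.pi / 2) : ℝ) : ℂ) =
        64 * σ 0 / Real.pi ^ 2 + l := by
      have hpi : (Real.pi : ℂ) ≠ 0 := by exact_mod_cast Real.pi_ne_zero
      rw [hψ0, mul_div_cancel₀ _ two_ne_zero]
      field_simp
      linear_combination -l * (Real.pi : ℂ) ^ 2 * Complex.I_sq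
    rw [h2] at h1
    refine h1.congr' ?_
    filter_upwards [eventually_gt_atTop 0] with Y hY
    exact (hDint Y hY).symm
  have hε : 0 ≤ ε := by
    have := (norm_nonneg _).trans (hDbd 1 one_pos)
    norm_num at this
    exact this
  refine le_of_tendsto hDlim.norm ?_
  filter_upwards [eventually_gt_atTop 0] with Y hY
  refine (intervalIntegral.norm_integral_le_of_norm_le hY.le
    (Eventually.of_forall fun y hy => hDbd y hy.1) ?_).trans ?_
  · refine Continuous.intervalIntegrable ?_ _ _
    exact continuous_const.mul (Continuous.inv₀ (by fun_prop) fun y => by positivity)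
  · rw [intervalIntegral.integral_const_mul, integral_inv_one_add_sq, Real.arctan_zero, sub_zero,
      mul_comm]
    gcongr
    linarith [Real.arctan_lt_pi_div_two Y, Real.pi_le_four]

/-- The absolute value of the factor of `kernelRatio N ν` that does not depend on `ν`. -/
noncomputable def ratioCoeff (N : ℝ) : ℝ :=
  128 * N ^ 6 / ((2 * N - 1) * (5 * N) * (5 * N - 1) * (5 * N - 2) * (5 * N - 3) * (5 * N - 4))

/-- A bound for `‖ν ^ 3 * wzF n ν‖` on the imaginary axis and at the half-integers. -/
noncomputable def wzBound : ℕ → ℝ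
  | 0 => 2048
  | n + 1 => wzBound n * (20 * ratioCoeff (n + 1))

theorem ratioCoeff_denom_pos (n : ℕ) :
    0 < (2 * (n + 1 : ℝ) - 1) * (5 * (n + 1)) * (5 * (n + 1) - 1) * (5 * (n + 1) - 2) *
      (5 * (n + 1) - 3) * (5 * (n + 1) - 4) := by
  have hn : (0 : ℝ) ≤ n := n.cast_nonneg
  have h1 : 0 < 2 * (n + 1 : ℝ) - 1 := by linarith
  have h2 : 0 < 5 * (n + 1 : ℝ) - 1 := by linarith
  have h3 : 0 < 5 * (n + 1 : ℝ) - 2 := by linarith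
  have h4 : 0 < 5 * (n + 1 : ℝ) - 3 := by linarith
  have h5 : 0 < 5 * (n + 1 : ℝ) - 4 := by linarith
  positivity

theorem ratioCoeff_pos (n : ℕ) : 0 < ratioCoeff (n + 1) :=
  div_pos (by positivity) (ratioCoeff_denom_pos n)

theorem wzBound_pos (n : ℕ) : 0 < wzBound n := by
  induction n with
  | zero => norm_num [wzBound]
  | succ n ih => have := ratioCoeff_pos n; rw [wzBound]; positivity

theorem ratioCoeff_le {n : ℕ} (hn : 3 ≤ n) : 20 * ratioCoeff (n + 1) ≤ 9 / 10 := by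
  obtain ⟨k, rfl⟩ := Nat.exists_eq_add_of_le hn
  have := ratioCoeff_denom_pos (3 + k)
  rw [ratioCoeff, ← mul_div_assoc, div_le_iff₀ this, ← sub_nonneg]
  push_cast
  ring_nf
  positivity

theorem tendsto_wzBound : Tendsto wzBound atTop (𝓝 0) := by
  refine (summable_of_ratio_norm_eventually_le (r := 9 / 10) (by norm_num) ?_).tendsto_atTop_zero
  filter_upwards [eventually_ge_atTop 3] with n hn
  rw [Real.norm_of_nonneg (wzBound_pos _).le, Real.norm_of_nonneg (wzBound_pos _).le, wzBound,
    mul_comm]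
  exact mul_le_mul_of_nonneg_right (ratioCoeff_le hn) (wzBound_pos n).le

theorem norm_kernelRatio (n : ℕ) {ν : ℂ} {s : ℝ} (hs : ν ^ 2 = s) :
    ‖kernelRatio (n + 1) ν‖ = ratioCoeff (n + 1) *
      (|(n : ℝ) ^ 2 - 4 * s| * |(2 * n + 1 / 2) ^ 2 - s| * |(2 * n + 3 / 2) ^ 2 - s| /
        |(n + 1) ^ 2 - s| ^ 3) := by
  have h : kernelRatio (n + 1) ν = ((-ratioCoeff (n + 1) *
      (((n : ℝ) ^ 2 - 4 * s) * ((2 * n + 1 / 2) ^ 2 - s) * ((2 * n + 3 / 2) ^ 2 - s) /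
        ((n + 1) ^ 2 - s) ^ 3) : ℝ) : ℂ) := by
    rw [kernelRatio, hs, ratioCoeff]
    push_cast
    ring
  rw [h, Complex.norm_real, Real.norm_eq_abs, abs_mul, abs_neg, abs_of_pos (ratioCoeff_pos n),
    abs_div, abs_mul, abs_mul, abs_pow]

theorem norm_kernelRatio_mul_I_le (n : ℕ) (y : ℝ) :
    ‖kernelRatio (n + 1) (y * Complex.I)‖ ≤ 20 * ratioCoeff (n + 1) := by
  rw [norm_kernelRatio n (s := -y ^ 2) (by push_cast; rw [mul_pow, Complex.I_sq]; ring), mul_comm]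
  refine mul_le_mul_of_nonneg_right ?_ (ratioCoeff_pos n).le
  have hn : (0 : ℝ) ≤ n := n.cast_nonneg
  simp only [mul_neg, sub_neg_eq_add]
  rw [abs_of_nonneg (by positivity), abs_of_nonneg (by positivity), abs_of_nonneg (by positivity),
    abs_of_nonneg (by positivity), div_le_iff₀ (by positivity)]
  calc _ ≤ ((n + 1 : ℝ) ^ 2 + 4 * y ^ 2) * (4 * (n + 1 : ℝ) ^ 2 + y ^ 2) *
        (4 * (n + 1 : ℝ) ^ 2 + y ^ 2) := by
        gcongr
        · linarith
        · nlinarith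
        · nlinarith
    _ ≤ _ := by
        have h1 : 0 ≤ (n + 1 : ℝ) ^ 2 := by positivity
        have h2 : 0 ≤ y ^ 2 := by positivity
        generalize (n + 1 : ℝ) ^ 2 = X at *
        generalize y ^ 2 = Y at *
        have : 0 ≤ X * (2 * X - 3 * Y) ^ 2 + 18 * X * Y ^ 2 + 16 * Y ^ 3 := by positivity
        linarith

theorem norm_wzF_mul_I_le (n : ℕ) {y : ℝ} (hy : 0 < y) :
    ‖wzF n (y * Complex.I)‖ ≤ wzBound n / y ^ 3 := by
  induction n with
  | zero => simp [wzF, wzBound, abs_of_pos hy]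
  | succ n ih =>
    rw [wzF, wzBound, norm_mul, mul_div_right_comm]
    exact mul_le_mul ih (norm_kernelRatio_mul_I_le n y) (norm_nonneg _)
      (div_nonneg (wzBound_pos n).le (by positivity))

theorem wzF_half_eq_zero {n m : ℕ} (h : m < 2 * n) : wzF n (m + 1 / 2) = 0 := by
  induction n with
  | zero => omega
  | succ n ih =>
    rw [wzF]
    by_cases h1 : m < 2 * n
    · rw [ih h1, zero_mul]
    · obtain rfl | rfl : m = 2 * n ∨ m = 2 * n + 1 := by omega
      · apply mul_eq_zero_of_right
        rw [kernelRatio]; push_cast; ring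
      · apply mul_eq_zero_of_right
        rw [kernelRatio]; push_cast; ring

theorem norm_wzF_half_le (n m : ℕ) :
    ‖wzF n (m + 1 / 2)‖ ≤ wzBound n / (m + 1 / 2) ^ 3 := by
  have hcast : (m + 1 / 2 : ℂ) = ((m + 1 / 2 : ℝ) : ℂ) := by push_cast; ring
  have hm : 0 < (m + 1 / 2 : ℝ) := by positivity
  induction n with
  | zero =>
    rw [hcast, wzF, wzBound, norm_div, norm_pow, Complex.norm_real, Real.norm_of_nonneg hm.le]
    norm_num
  | succ n ih =>
    have hK := wzBound_pos (n + 1)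
    by_cases h : m < 2 * (n + 1)
    · rw [wzF_half_eq_zero h, norm_zero]
      positivity
    rw [wzF, wzBound, norm_mul, mul_div_right_comm]
    refine mul_le_mul ih ?_ (norm_nonneg _) (div_nonneg (wzBound_pos n).le (by positivity))
    rw [hcast, norm_kernelRatio n (s := (m + 1 / 2) ^ 2) (by push_cast; ring), mul_comm]
    refine mul_le_mul_of_nonneg_right ?_ (ratioCoeff_pos n).le
    have hb : 2 * (n : ℝ) + 2 + 1 / 2 ≤ m + 1 / 2 := by
      have : ((2 * (n + 1) : ℕ) : ℝ) ≤ m := by exact_mod_cast not_lt.1 h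
      push_cast at this; linarith
    have hn : (0 : ℝ) ≤ n := n.cast_nonneg
    generalize (m + 1 / 2 : ℝ) = b at *
    have h1 : |(n : ℝ) ^ 2 - 4 * b ^ 2| ≤ 4 * b ^ 2 := by
      rw [abs_le]; constructor <;> nlinarith
    have h2 : |(2 * n + 1 / 2 : ℝ) ^ 2 - b ^ 2| ≤ b ^ 2 := by
      rw [abs_le]; constructor <;> nlinarith
    have h3 : |(2 * n + 3 / 2 : ℝ) ^ 2 - b ^ 2| ≤ b ^ 2 := by
      rw [abs_le]; constructor <;> nlinarith
    have h4 : 3 / 4 * b ^ 2 ≤ |(n + 1 : ℝ) ^ 2 - b ^ 2| := by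
      rw [abs_sub_comm]
      exact le_trans (by nlinarith) (le_abs_self _)
    have h5 : (3 / 4 * b ^ 2) ^ 3 ≤ |(n + 1 : ℝ) ^ 2 - b ^ 2| ^ 3 := by gcongr
    rw [div_le_iff₀ (lt_of_lt_of_le (by positivity) h5)]
    calc _ ≤ 4 * b ^ 2 * b ^ 2 * b ^ 2 := by gcongr
      _ ≤ 20 * (3 / 4 * b ^ 2) ^ 3 := by
        have : 0 ≤ b ^ 6 := by positivity
        nlinarith
      _ ≤ _ := by gcongr

theorem tendsto_inv_sub_sq_cocompact (c : ℂ) :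
    Tendsto (fun μ : ℂ => (c - μ ^ 2)⁻¹) (cocompact ℂ) (𝓝 0) := by
  rw [← Metric.cobounded_eq_cocompact]
  refine tendsto_inv₀_cobounded.comp ?_
  rw [← tendsto_norm_atTop_iff_cobounded]
  have h : Tendsto (fun μ : ℂ => ‖μ‖ ^ 2 + -‖c‖) (Bornology.cobounded ℂ) atTop :=
    tendsto_atTop_add_const_right _ _ ((tendsto_pow_atTop two_ne_zero).comp
      tendsto_norm_cobounded_atTop)
  refine tendsto_atTop_mono (fun μ => ?_) h
  have := norm_sub_norm_le (μ ^ 2) c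
  rw [norm_pow] at this
  rw [norm_sub_rev]
  linarith

theorem eventually_sub_sq_ne_zero (c : ℂ) : ∀ᶠ μ : ℂ in cocompact ℂ, c - μ ^ 2 ≠ 0 := by
  have h : ({μ : ℂ | c - μ ^ 2 = 0}).Finite := by
    obtain ⟨r, hr⟩ := IsAlgClosed.exists_pow_nat_eq c two_pos
    refine (Set.toFinite {r, -r}).subset fun μ hμ => ?_
    have : μ ^ 2 = r ^ 2 := by rw [hr]; exact (sub_eq_zero.1 hμ).symm
    simpa using sq_eq_sq_iff_eq_or_eq_neg.1 this
  filter_upwards [h.isCompact.compl_mem_cocompact] with μ hμ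
  exact hμ

theorem tendsto_sub_sq_div_cocompact (a b c : ℂ) :
    Tendsto (fun μ : ℂ => (a - b * μ ^ 2) / (c - μ ^ 2)) (cocompact ℂ) (𝓝 b) := by
  have h := ((tendsto_inv_sub_sq_cocompact c).const_mul (a - b * c)).const_add b
  rw [mul_zero, add_zero] at h
  refine h.congr' ?_
  filter_upwards [eventually_sub_sq_ne_zero c] with μ hμ
  field_simp
  ring

theorem exists_tendsto_mateCore (n : ℕ) :
    ∃ l, Tendsto (mateCore n) (cocompact ℂ) (𝓝 l) := by
  induction n with
  | zero => exact ⟨_, tendsto_const_nhds⟩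
  | succ n ih =>
    obtain ⟨l, hl⟩ := ih
    have key := fun a b => tendsto_sub_sq_div_cocompact a b ((n + 1 + 1 / 2) ^ 2)
    refine ⟨_, (hl.mul (((key ((n + 1) ^ 2) 4).mul ((key ((2 * (n + 1) - 1) ^ 2) 1).mul
      (key ((2 * (n + 1)) ^ 2) 1))).const_mul
        (-128 * (n + 1 : ℂ) ^ 5 / (5 * (5 * (n + 1) + 1) * (5 * (n + 1) + 2) * (5 * (n + 1) + 3) *
          (5 * (n + 1) + 4) * (2 * (n + 1) + 1))))).congr fun μ => ?_⟩
    simp only [mateCore, mateRatio]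
    generalize -128 * (n + 1 : ℂ) ^ 5 / (5 * (5 * (n + 1) + 1) * (5 * (n + 1) + 2) *
      (5 * (n + 1) + 3) * (5 * (n + 1) + 4) * (2 * (n + 1) + 1)) = c
    generalize ((n : ℂ) + 1 + 1 / 2) ^ 2 - μ ^ 2 = d
    ring

theorem exists_tendsto_wzG (n : ℕ) : ∃ l, Tendsto (wzG n) (cocompact ℂ) (𝓝 l) := by
  obtain ⟨l, hl⟩ := exists_tendsto_mateCore n
  have hd := tendsto_inv_sub_sq_cocompact (1 / 4)
  have hs := tendsto_sub_sq_div_cocompact 0 (-1) (1 / 4)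
  set N : ℂ := n + 1 with hN
  refine ⟨_, ((hl.mul hs).mul ((((hd.pow 2).const_mul
    ((30 - 425 * N + 2275 * N ^ 2 - 5600 * N ^ 3 + 5532 * N ^ 4) * (2 * N - 1) ^ 2)).add
    ((hd.mul hs).const_mul
      (-240 + 3160 * N - 15048 * N ^ 2 + 30592 * N ^ 3 - 22944 * N ^ 4))).add
    ((hs.pow 2).const_mul (7728 * N ^ 2 - 3920 * N + 480)))).congr fun μ => ?_⟩
  simp only [wzG, matePoly, ← hN]
  generalize 1 / 4 - μ ^ 2 = d
  ring

theorem notHalfInt_natCast (m : ℕ) : NotHalfInt m := by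
  intro k hk
  have : (2 * m : ℤ) = 2 * k + 1 := by
    have h2 : (2 * m : ℂ) = 2 * k + 1 := by rw [hk]; ring
    exact_mod_cast h2
  omega

theorem summable_half_pow {k : ℕ} (hk : 1 < k) : Summable fun m : ℕ => 1 / (m + 1 / 2 : ℝ) ^ k := by
  have h := (Real.summable_one_div_nat_pow.2 hk).comp_injective (i := fun m : ℕ => 2 * m + 1)
    fun a b h => by simpa using h
  refine (h.mul_left (2 ^ k)).congr fun m => ?_
  simp only [Function.comp_apply]
  push_cast
  rw [show (2 * m + 1 : ℝ) = 2 * (m + 1 / 2) by ring, mul_pow]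
  field_simp

theorem sum_wzG_natCast (n M : ℕ) :
    ∑ k ∈ Finset.range n, wzG k M =
      ∑ m ∈ Finset.range M, (wzF n (m + 1 / 2) - wzF 0 (m + 1 / 2)) := by
  have h : ∀ m : ℕ, wzF n (m + 1 / 2) - wzF 0 (m + 1 / 2) =
      ∑ k ∈ Finset.range n, wzG k (m + 1 : ℕ) - ∑ k ∈ Finset.range n, wzG k m := fun m => by
    push_cast
    exact wzF_sub_zero n (notHalfInt_natCast m)
  simp only [h]
  rw [Finset.sum_range_sub fun m : ℕ => ∑ k ∈ Finset.range n, wzG k m]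
  simp [wzG]

theorem tendsto_sum_limits {l : ℕ → ℂ} (hl : ∀ n, Tendsto (wzG n) (cocompact ℂ) (𝓝 (l n))) :
    Tendsto (fun n => ∑ k ∈ Finset.range n, l k -
      ∑ m ∈ Finset.range n, 2048 / (m + 1 / 2 : ℂ) ^ 3) atTop (𝓝 0) := by
  have hs := summable_half_pow (k := 3) (by norm_num)
  have hsC : Summable fun m : ℕ => 2048 / (m + 1 / 2 : ℂ) ^ 3 := by
    refine ((Complex.summable_ofReal.2 hs).mul_left 2048).congr fun m => ?_
    push_cast
    ring
  set Z : ℝ := ∑' m : ℕ, 1 / (m + 1 / 2 : ℝ) ^ 3 with hZ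
  set S : ℂ := ∑' m : ℕ, 2048 / (m + 1 / 2 : ℂ) ^ 3 with hS
  have hcast : Tendsto (fun M : ℕ => (M : ℂ)) atTop (cocompact ℂ) := by
    rw [← Metric.cobounded_eq_cocompact, ← tendsto_norm_atTop_iff_cobounded]
    simpa using tendsto_natCast_atTop_atTop (R := ℝ)
  have hbd : ∀ n, ‖∑ k ∈ Finset.range n, l k - S‖ ≤ wzBound n * Z := by
    intro n
    have h1 : Tendsto (fun M : ℕ => ∑ k ∈ Finset.range n, wzG k M) atTop
        (𝓝 (∑ k ∈ Finset.range n, l k)) :=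
      tendsto_finsetSum _ fun k _ => (hl k).comp hcast
    refine le_of_tendsto (h1.sub hsC.hasSum.tendsto_sum_nat).norm (Eventually.of_forall fun M => ?_)
    rw [sum_wzG_natCast, ← Finset.sum_sub_distrib]
    calc _ = ‖∑ m ∈ Finset.range M, wzF n (m + 1 / 2)‖ := by
          congr 1
          refine Finset.sum_congr rfl fun m _ => ?_
          simp only [wzF]
          ring
      _ ≤ ∑ m ∈ Finset.range M, wzBound n * (1 / (m + 1 / 2 : ℝ) ^ 3) := by
          refine norm_sum_le_of_le _ fun m _ => ?_
          rw [mul_one_div]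
          exact norm_wzF_half_le n m
      _ ≤ _ := by
          rw [← Finset.mul_sum]
          exact mul_le_mul_of_nonneg_left (hs.sum_le_tsum _ fun m _ => by positivity)
            (wzBound_pos n).le
  have hl0 : Tendsto (fun n => ∑ k ∈ Finset.range n, l k - S) atTop (𝓝 0) :=
    squeeze_zero_norm hbd (by simpa using tendsto_wzBound.mul_const Z)
  have := hl0.sub (hsC.hasSum.tendsto_sum_nat.sub_const S)
  rw [sub_self, sub_zero] at this
  exact this.congr fun n => by ring

theorem sq_sub_sq_ne_zero_of_strip {b : ℝ} (hb : 1 ≤ b) {μ : ℂ} (hμ : |μ.re| < 1) :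
    (b : ℂ) ^ 2 - μ ^ 2 ≠ 0 := by
  rw [abs_lt] at hμ
  rw [sq_sub_sq]
  refine mul_ne_zero (fun h => ?_) (fun h => ?_)
  · have := congrArg Complex.re h
    simp at this
    linarith
  · have := congrArg Complex.re h
    simp at this
    linarith

theorem differentiableOn_mateCore (n : ℕ) :
    DifferentiableOn ℂ (mateCore n) {μ | |μ.re| < 1} := by
  induction n with
  | zero => exact differentiableOn_const _
  | succ n ih =>
    refine ih.mul ?_
    unfold mateRatio
    refine DifferentiableOn.div (by fun_prop) (by fun_prop) fun μ hμ => pow_ne_zero 3 ?_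
    have := sq_sub_sq_ne_zero_of_strip (b := n + 1 + 1 / 2) (by linarith [n.cast_nonneg (α := ℝ)]) hμ
    push_cast at this
    exact this

/-- The function with `μ² * shiftTerm b μ = 1024 (1/(b+μ)³ + 1/(b-μ)³) - 2048/b³`. -/
noncomputable def shiftTerm (b μ : ℂ) : ℂ :=
  2048 * (6 * b ^ 4 - 3 * b ^ 2 * μ ^ 2 + μ ^ 4) / (b ^ 3 * (b ^ 2 - μ ^ 2) ^ 3)

/-- `shiftTerm (m + 1/2)` multiplied by `(1/4 - μ²)³`, which removes the poles in the strip
`|re μ| < 1`. -/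
noncomputable def shiftCore : ℕ → ℂ → ℂ
  | 0, μ => 2048 * (6 * (1 / 2) ^ 4 - 3 * (1 / 2) ^ 2 * μ ^ 2 + μ ^ 4) / (1 / 2) ^ 3
  | m + 1, μ => (1 / 4 - μ ^ 2) ^ 3 * shiftTerm (m + 1 + 1 / 2) μ

theorem shiftCore_div (m : ℕ) {μ : ℂ} (h : 1 / 4 - μ ^ 2 ≠ 0) :
    μ ^ 2 * shiftCore m μ / (1 / 4 - μ ^ 2) ^ 3 = μ ^ 2 * shiftTerm (m + 1 / 2) μ := by
  cases m with
  | zero =>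
    simp only [shiftCore, shiftTerm]
    rw [show (((0 : ℕ) : ℂ) + 1 / 2) ^ 2 - μ ^ 2 = 1 / 4 - μ ^ 2 by push_cast; ring]
    generalize 1 / 4 - μ ^ 2 = d at *
    push_cast
    field_simp
    ring
  | succ m =>
    rw [shiftCore, Nat.cast_succ]
    generalize 1 / 4 - μ ^ 2 = d at *
    generalize shiftTerm (m + 1 + 1 / 2) μ = t
    field_simp

theorem sq_mul_shiftTerm {b μ : ℂ} (hb : b ≠ 0) (h1 : b + μ ≠ 0) (h2 : b - μ ≠ 0) :
    μ ^ 2 * shiftTerm b μ = 1024 * (1 / (b + μ) ^ 3 + 1 / (b - μ) ^ 3) - 2048 / b ^ 3 := by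
  rw [shiftTerm, sq_sub_sq]
  field_simp
  ring

theorem tendsto_sq_mul_shiftTerm (b : ℂ) :
    Tendsto (fun μ => μ ^ 2 * shiftTerm b μ) (cocompact ℂ) (𝓝 (-(2048 / b ^ 3))) := by
  have hd := tendsto_inv_sub_sq_cocompact (b ^ 2)
  have hs := tendsto_sub_sq_div_cocompact 0 (-1) (b ^ 2)
  have h := (hs.const_mul (2048 / b ^ 3)).mul
    ((((hd.pow 2).const_mul (6 * b ^ 4)).sub ((hd.mul hs).const_mul (3 * b ^ 2))).add (hs.pow 2))
  have e : 2048 / b ^ 3 * -1 * (6 * b ^ 4 * 0 ^ 2 - 3 * b ^ 2 * (0 * -1) + (-1) ^ 2) =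
    -(2048 / b ^ 3) := by ring
  rw [e] at h
  refine h.congr fun μ => ?_
  rw [shiftTerm]
  generalize b ^ 2 - μ ^ 2 = d
  ring

theorem differentiableOn_shiftCore (m : ℕ) :
    DifferentiableOn ℂ (shiftCore m) {μ | |μ.re| < 1} := by
  cases m with
  | zero => unfold shiftCore; fun_prop
  | succ m =>
    change DifferentiableOn ℂ (fun μ => (1 / 4 - μ ^ 2) ^ 3 * shiftTerm (m + 1 + 1 / 2) μ) _
    unfold shiftTerm
    refine DifferentiableOn.mul (by fun_prop) (DifferentiableOn.div (by fun_prop) (by fun_prop)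
      fun μ hμ => ?_)
    have h1 := sq_sub_sq_ne_zero_of_strip (b := m + 1 + 1 / 2)
      (by linarith [m.cast_nonneg (α := ℝ)]) hμ
    push_cast at h1
    have h2 : ((m + 1 + 1 / 2 : ℝ) : ℂ) ≠ 0 := by
      rw [Complex.ofReal_ne_zero]; positivity
    push_cast at h2
    exact mul_ne_zero (pow_ne_zero 3 h2) (pow_ne_zero 3 h1)

theorem shiftCore_neg (m : ℕ) (μ : ℂ) : shiftCore m (-μ) = shiftCore m μ := by
  cases m <;> simp only [shiftCore, shiftTerm, neg_sq, Even.neg_pow (by decide : Even 4)]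

theorem shiftCore_zero (m : ℕ) : 64 * shiftCore m 0 = 12288 / (m + 1 / 2) ^ 5 := by
  cases m with
  | zero => norm_num [shiftCore]
  | succ m =>
    have h2 : ((m + 1 + 1 / 2 : ℝ) : ℂ) ≠ 0 := by
      rw [Complex.ofReal_ne_zero]; positivity
    push_cast at h2
    rw [shiftCore, shiftTerm]
    push_cast
    generalize (m + 1 + 1 / 2 : ℂ) = b at *
    field_simp
    ring

theorem tanh_cube_div_cube_le {y : ℝ} (hy : 0 < y) :
    Real.tanh (Real.pi * y) ^ 3 / y ^ 3 ≤ 512 / (1 + y ^ 2) := by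
  set x := Real.pi * y with hx
  have hx0 : 0 < x := by positivity
  have h0 := tanh_nonneg hx0.le
  have h1 := (Real.tanh_lt_one x).le
  have h2 : Real.tanh x ≤ 2 * x := by
    rw [Real.tanh_eq_sinh_div_cosh, div_le_iff₀ (Real.cosh_pos _), Real.sinh_eq, Real.cosh_eq]
    have e1 : Real.exp (-x) = Real.exp x * Real.exp (-2 * x) := by
      rw [← Real.exp_add]; ring_nf
    have e2 := Real.add_one_le_exp (-2 * x)
    have e3 := Real.exp_pos x
    have e4 := mul_le_mul_of_nonneg_left e2 e3.le
    have e5 : 0 ≤ x * Real.exp (-x) := by positivity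
    nlinarith
  rcases le_total y 1 with h | h
  · have h3 : Real.tanh x / y ≤ 6.3 := by
      rw [div_le_iff₀ hy]
      have := Real.pi_lt_d2
      nlinarith
    rw [← div_pow, le_div_iff₀ (by positivity)]
    calc _ ≤ (6.3 : ℝ) ^ 3 * (1 + 1 ^ 2) := by gcongr
      _ ≤ _ := by norm_num
  · rw [div_le_div_iff₀ (by positivity) (by positivity)]
    calc _ ≤ 1 ^ 3 * (1 + y ^ 2) := by gcongr
      _ ≤ _ := by nlinarith [sq_nonneg y, mul_nonneg (sq_nonneg y) (sub_nonneg.2 h)]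

theorem notHalfInt_of_im_ne_zero {μ : ℂ} (h : μ.im ≠ 0) : NotHalfInt μ := by
  rintro k rfl
  simp at h

theorem sum_wzG_diff (n : ℕ) {y : ℝ} (hy : 0 < y) :
    ∑ k ∈ Finset.range n, wzG k (1 / 2 + y * Complex.I) -
      ∑ k ∈ Finset.range n, wzG k (1 / 2 - y * Complex.I) =
        wzF n (y * Complex.I) + 2048 / (y * Complex.I) ^ 3 := by
  have h := wzF_sub_zero n (μ := -(1 / 2) + y * Complex.I)
    (notHalfInt_of_im_ne_zero (by simpa using hy.ne'))
  rw [show -(1 / 2) + (y * Complex.I) + 1 / 2 = y * Complex.I by ring,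
    show -(1 / 2) + (y * Complex.I) + 1 = 1 / 2 + y * Complex.I by ring, wzF] at h
  have e : ∀ k, wzG k (1 / 2 - y * Complex.I) = wzG k (-(1 / 2) + y * Complex.I) := fun k => by
    rw [← wzG_neg]; congr 1; ring
  simp only [e]
  rw [← h]
  ring

theorem sum_shiftTerm_diff (n : ℕ) {y : ℝ} (hy : 0 < y) :
    ∑ m ∈ Finset.range n, (1 / 2 + y * Complex.I) ^ 2 *
        shiftTerm (m + 1 / 2) (1 / 2 + y * Complex.I) -
      ∑ m ∈ Finset.range n, (1 / 2 - y * Complex.I) ^ 2 *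
        shiftTerm (m + 1 / 2) (1 / 2 - y * Complex.I) =
      1024 * (1 / (n + y * Complex.I) ^ 3 - 1 / (n - y * Complex.I) ^ 3) -
        2048 / (y * Complex.I) ^ 3 := by
  have key := Finset.sum_range_sub (fun m : ℕ =>
    1024 * (1 / (m + y * Complex.I) ^ 3 - 1 / (m - y * Complex.I) ^ 3)) n
  have e0 : 1024 * (1 / (((0 : ℕ) : ℂ) + y * Complex.I) ^ 3 -
      1 / (((0 : ℕ) : ℂ) - y * Complex.I) ^ 3) = 2048 / (y * Complex.I) ^ 3 := by
    rw [Nat.cast_zero, zero_add, zero_sub, Odd.neg_pow (by decide)]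
    ring
  rw [e0] at key
  rw [← key, ← Finset.sum_sub_distrib]
  refine Finset.sum_congr rfl fun m _ => ?_
  have ne : ∀ a : ℂ, a.im ≠ 0 → a ≠ 0 := fun a ha h => ha (by simp [h])
  have hb : (m + 1 / 2 : ℂ) ≠ 0 := by
    have : ((m + 1 / 2 : ℝ) : ℂ) ≠ 0 := by rw [Complex.ofReal_ne_zero]; positivity
    push_cast at this; exact this
  rw [sq_mul_shiftTerm hb (ne _ (by simpa using hy.ne')) (ne _ (by simpa using hy.ne')),
    sq_mul_shiftTerm hb (ne _ (by simpa using hy.ne')) (ne _ (by simpa using hy.ne')),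
    show (m + 1 / 2 + (1 / 2 + y * Complex.I) : ℂ) = (m + 1 : ℕ) + y * Complex.I by push_cast; ring,
    show (m + 1 / 2 - (1 / 2 + y * Complex.I) : ℂ) = m - y * Complex.I by ring,
    show (m + 1 / 2 + (1 / 2 - y * Complex.I) : ℂ) = (m + 1 : ℕ) - y * Complex.I by push_cast; ring,
    show (m + 1 / 2 - (1 / 2 - y * Complex.I) : ℂ) = m + y * Complex.I by ring]
  ring

theorem norm_one_div_cube_le {n : ℕ} (hn : 0 < n) {z : ℂ} (hz : z.re = n) :
    ‖1 / z ^ 3‖ ≤ 1 / n / (1 + z.im ^ 2) := by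
  have hn' : (1 : ℝ) ≤ n := by exact_mod_cast hn
  have h1 : (n : ℝ) ≤ ‖z‖ := by rw [← hz]; exact Complex.re_le_norm z
  have h2 : 1 + z.im ^ 2 ≤ ‖z‖ ^ 2 := by
    rw [Complex.sq_norm, Complex.normSq_apply, hz]
    nlinarith
  rw [norm_div, norm_one, norm_pow, div_div]
  apply one_div_le_one_div_of_le (by positivity)
  calc n * (1 + z.im ^ 2) ≤ ‖z‖ * ‖z‖ ^ 2 := by gcongr
    _ = _ := by ring

theorem norm_partial_sums_le {l : ℕ → ℂ} (hl : ∀ n, Tendsto (wzG n) (cocompact ℂ) (𝓝 (l n)))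
    {n : ℕ} (hn : 0 < n) :
    ‖(∑ k ∈ Finset.range n, 64 * (mateCore k 0 * matePoly (k + 1) 0) +
        ∑ m ∈ Finset.range n, 12288 / (m + 1 / 2 : ℂ) ^ 5) / Real.pi ^ 2 +
      (∑ k ∈ Finset.range n, l k - ∑ m ∈ Finset.range n, 2048 / (m + 1 / 2 : ℂ) ^ 3)‖ ≤
      2 * (512 * wzBound n + 2048 * (1 / n)) := by
  set σ : ℂ → ℂ := fun μ => ∑ k ∈ Finset.range n, mateCore k μ * matePoly (k + 1) (μ ^ 2) +
    ∑ m ∈ Finset.range n, shiftCore m μ with hσ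
  have hσ0 : 64 * σ 0 = ∑ k ∈ Finset.range n, 64 * (mateCore k 0 * matePoly (k + 1) 0) +
      ∑ m ∈ Finset.range n, 12288 / (m + 1 / 2 : ℂ) ^ 5 := by
    simp only [hσ, mul_add, Finset.mul_sum, shiftCore_zero]
    norm_num
  have hfeq : ∀ μ : ℂ, 1 / 4 - μ ^ 2 ≠ 0 → μ ^ 2 * σ μ / (1 / 4 - μ ^ 2) ^ 3 =
      ∑ k ∈ Finset.range n, wzG k μ +
        ∑ m ∈ Finset.range n, μ ^ 2 * shiftTerm (m + 1 / 2) μ := by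
    intro μ hμ
    simp only [hσ, mul_add, add_div, Finset.mul_sum, Finset.sum_div, shiftCore_div _ hμ, wzG]
  rw [← hσ0, ← Finset.sum_sub_distrib]
  refine norm_le_of_strip (f := fun μ => μ ^ 2 * σ μ / (1 / 4 - μ ^ 2) ^ 3) ?_ ?_ (fun _ => rfl)
    ?_ ?_
  · refine DifferentiableOn.add (DifferentiableOn.fun_sum fun k _ =>
      (differentiableOn_mateCore k).mul ?_)
      (DifferentiableOn.fun_sum fun m _ => differentiableOn_shiftCore m)
    unfold matePoly
    fun_prop
  · intro μ
    simp only [hσ, mateCore_neg, shiftCore_neg, neg_sq]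
  · have h : Tendsto (fun μ => ∑ k ∈ Finset.range n, wzG k μ +
        ∑ m ∈ Finset.range n, μ ^ 2 * shiftTerm (m + 1 / 2) μ) (cocompact ℂ)
        (𝓝 (∑ k ∈ Finset.range n, l k + ∑ m ∈ Finset.range n, -(2048 / (m + 1 / 2 : ℂ) ^ 3))) :=
      (tendsto_finsetSum _ fun k _ => hl k).add
        (tendsto_finsetSum _ fun m _ => tendsto_sq_mul_shiftTerm _)
    rw [← Finset.sum_add_distrib] at h
    simp only [← sub_eq_add_neg] at h
    refine h.congr' ?_
    filter_upwards [eventually_sub_sq_ne_zero (1 / 4)] with μ hμ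
    exact (hfeq μ hμ).symm
  · intro y hy
    rw [hfeq _ (quarter_sub_sq_ne_zero (by simpa using hy.ne')),
      hfeq _ (quarter_sub_sq_ne_zero (by simpa using hy.ne')), add_sub_add_comm,
      sum_wzG_diff n hy, sum_shiftTerm_diff n hy]
    set T := Real.tanh (Real.pi * y) with hT
    have h0 : 0 ≤ T := tanh_nonneg (by positivity)
    have h1 : T ≤ 1 := (Real.tanh_lt_one _).le
    have hF := norm_wzF_mul_I_le n hy
    have hK := wzBound_pos n
    have b1 := norm_one_div_cube_le hn (z := n + y * Complex.I) (by simp)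
    have b2 := norm_one_div_cube_le hn (z := n - y * Complex.I) (by simp)
    simp only [Complex.add_im, Complex.sub_im, Complex.natCast_im, Complex.mul_im,
      Complex.ofReal_re, Complex.ofReal_im, Complex.I_re, Complex.I_im, mul_one, mul_zero,
      add_zero, zero_add, zero_sub, neg_sq] at b1 b2
    have b3 : ‖1024 * (1 / (n + y * Complex.I) ^ 3 - 1 / (n - y * Complex.I) ^ 3)‖ ≤
        2048 * (1 / n) / (1 + y ^ 2) := by
      rw [norm_mul]
      refine (mul_le_mul_of_nonneg_left ((norm_sub_le _ _).trans (add_le_add b1 b2))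
        (norm_nonneg _)).trans (le_of_eq ?_)
      norm_num
      ring
    calc _ = ‖wzF n (y * Complex.I) +
          1024 * (1 / (n + y * Complex.I) ^ 3 - 1 / (n - y * Complex.I) ^ 3)‖ * T ^ 3 := by
          congr 2; ring
      _ ≤ (‖wzF n (y * Complex.I)‖ +
          ‖1024 * (1 / (n + y * Complex.I) ^ 3 - 1 / (n - y * Complex.I) ^ 3)‖) * T ^ 3 := by
          gcongr; exact norm_add_le _ _
      _ ≤ wzBound n / y ^ 3 * T ^ 3 + 2048 * (1 / n) / (1 + y ^ 2) * 1 := by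
          rw [add_mul]
          gcongr
          exact pow_le_one₀ h0 h1
      _ = wzBound n * (T ^ 3 / y ^ 3) + 2048 * (1 / n) / (1 + y ^ 2) := by ring
      _ ≤ wzBound n * (512 / (1 + y ^ 2)) + 2048 * (1 / n) / (1 + y ^ 2) := by
          exact add_le_add_left (mul_le_mul_of_nonneg_left (tanh_cube_div_cube_le hy) hK.le) _
      _ = _ := by ring

theorem tendsto_partial_sums :
    Tendsto (fun n => ∑ k ∈ Finset.range n, 64 * (mateCore k 0 * matePoly (k + 1) 0) +
      ∑ m ∈ Finset.range n, 12288 / (m + 1 / 2 : ℂ) ^ 5) atTop (𝓝 0) := by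
  choose l hl using exists_tendsto_wzG
  have h1 : Tendsto (fun n : ℕ => 2 * (512 * wzBound n + 2048 * (1 / (n : ℝ)))) atTop (𝓝 0) := by
    simpa using ((tendsto_wzBound.const_mul 512).add
      (tendsto_one_div_atTop_nhds_zero_nat.const_mul 2048)).const_mul 2
  have h2 := squeeze_zero_norm' ((eventually_gt_atTop 0).mono fun n hn =>
    norm_partial_sums_le hl hn) h1
  have h3 := (h2.sub (tendsto_sum_limits hl)).mul_const ((Real.pi : ℂ) ^ 2)
  rw [sub_zero, zero_mul] at h3
  have hpi : (Real.pi : ℂ) ≠ 0 := by exact_mod_cast Real.pi_ne_zero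
  refine h3.congr fun n => ?_
  rw [add_sub_cancel_right, div_mul_cancel₀ _ (pow_ne_zero 2 hpi)]

theorem risingFactorial_succ (a : ℝ) (n : ℕ) :
    risingFactorial a (n + 1) = risingFactorial a n * (a + n) :=
  Finset.prod_range_succ _ _

theorem risingFactorial_pos {a : ℝ} (ha : 0 < a) (n : ℕ) : 0 < risingFactorial a n :=
  Finset.prod_pos fun _ _ => by positivity

/-- The `n`-th summand of the series, without its polynomial factor. -/
noncomputable def hyperTerm (n : ℕ) : ℝ :=
  (-(2 ^ 10) / 5 ^ 5) ^ (n + 1) * (risingFactorial 1 (n + 1)) ^ 9 /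
    ((risingFactorial (1 / 2) (n + 1)) ^ 5 * risingFactorial (1 / 5) (n + 1) *
      risingFactorial (2 / 5) (n + 1) * risingFactorial (3 / 5) (n + 1) *
      risingFactorial (4 / 5) (n + 1)) / ((n : ℝ) + 1) ^ 9

/-- The ratio of consecutive values of `hyperTerm`, as a function of the index `N = n + 1`. -/
noncomputable def hyperRatio (N : ℝ) : ℝ :=
  -(2 ^ 15 * N ^ 9) /
    (5 * (5 * N + 1) * (5 * N + 2) * (5 * N + 3) * (5 * N + 4) * (2 * N + 1) ^ 5)

theorem hyperTerm_zero : hyperTerm 0 = -4096 / 15 := by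
  norm_num [hyperTerm, risingFactorial]

theorem hyperTerm_succ (n : ℕ) : hyperTerm (n + 1) = hyperTerm n * hyperRatio (n + 1) := by
  have hN : (0 : ℝ) < n + 1 := by positivity
  have h1 := risingFactorial_pos (a := 1 / 2) (by norm_num) (n + 1)
  have h2 := risingFactorial_pos (a := 1 / 5) (by norm_num) (n + 1)
  have h3 := risingFactorial_pos (a := 2 / 5) (by norm_num) (n + 1)
  have h4 := risingFactorial_pos (a := 3 / 5) (by norm_num) (n + 1)
  have h5 := risingFactorial_pos (a := 4 / 5) (by norm_num) (n + 1)
  unfold hyperTerm hyperRatio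
  rw [pow_succ _ (n + 1)]
  simp only [risingFactorial_succ _ (n + 1), Nat.cast_add, Nat.cast_one]
  generalize (-(2 ^ 10) / 5 ^ 5 : ℝ) ^ (n + 1) = c
  generalize risingFactorial 1 (n + 1) = f
  generalize risingFactorial (1 / 2) (n + 1) = a1 at *
  generalize risingFactorial (1 / 5) (n + 1) = a2 at *
  generalize risingFactorial (2 / 5) (n + 1) = a3 at *
  generalize risingFactorial (3 / 5) (n + 1) = a4 at *
  generalize risingFactorial (4 / 5) (n + 1) = a5 at *
  generalize (n + 1 : ℝ) = N at *
  rw [add_comm 1 N, show 1 / 2 + N = (2 * N + 1) / 2 by ring,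
    show 1 / 5 + N = (5 * N + 1) / 5 by ring, show 2 / 5 + N = (5 * N + 2) / 5 by ring,
    show 3 / 5 + N = (5 * N + 3) / 5 by ring, show 4 / 5 + N = (5 * N + 4) / 5 by ring]
  have k0 : N + 1 ≠ 0 := by positivity
  have k1 : 2 * N + 1 ≠ 0 := by positivity
  have k2 : 5 * N + 1 ≠ 0 := by positivity
  have k3 : 5 * N + 2 ≠ 0 := by positivity
  have k4 : 5 * N + 3 ≠ 0 := by positivity
  have k5 : 5 * N + 4 ≠ 0 := by positivity
  generalize N + 1 = b0 at *
  generalize 2 * N + 1 = b1 at *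
  generalize 5 * N + 1 = b2 at *
  generalize 5 * N + 2 = b3 at *
  generalize 5 * N + 3 = b4 at *
  generalize 5 * N + 4 = b5 at *
  field_simp

theorem mateRatio_zero (n : ℕ) :
    mateRatio (n + 1) 0 = hyperRatio (n + 1) * (2 * n + 1) ^ 2 / (2 * (n + 1) + 1) ^ 2 := by
  have k1 : (2 * (n + 1) + 1 : ℂ) ≠ 0 := by exact_mod_cast (2 * (n + 1)).succ_ne_zero
  rw [mateRatio, hyperRatio]
  push_cast
  rw [show (n + 1 + 1 / 2 : ℂ) = (2 * (n + 1) + 1) / 2 by ring,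
    show (2 * (n + 1) - 1 : ℂ) = 2 * n + 1 by ring]
  generalize (2 * n + 1 : ℂ) = a
  generalize (2 * (n + 1) + 1 : ℂ) = b1 at *
  generalize (5 * (n + 1) + 1 : ℂ) = b2 at *
  generalize (5 * (n + 1) + 2 : ℂ) = b3 at *
  generalize (5 * (n + 1) + 3 : ℂ) = b4 at *
  generalize (5 * (n + 1) + 4 : ℂ) = b5 at *
  field_simp
  ring

theorem mateCore_zero_right (n : ℕ) : 64 * mateCore n 0 * (2 * n + 1) ^ 2 = hyperTerm n := by
  induction n with
  | zero => rw [hyperTerm_zero, mateCore]; norm_num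
  | succ n ih =>
    have k1 : (2 * (n + 1) + 1 : ℂ) ≠ 0 := by exact_mod_cast (2 * (n + 1)).succ_ne_zero
    rw [hyperTerm_succ, mateCore, mateRatio_zero, Complex.ofReal_mul, ← ih]
    push_cast
    generalize (hyperRatio _ : ℂ) = r
    field_simp

theorem abs_hyperRatio_le {N : ℝ} (hN : 0 < N) : |hyperRatio N| ≤ 1 / 2 := by
  rw [hyperRatio, abs_div, abs_neg, abs_of_pos (by positivity), abs_of_pos (by positivity),
    div_le_div_iff₀ (by positivity) (by norm_num), ← sub_nonneg]
  ring_nf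
  positivity

theorem abs_hyperTerm_le (n : ℕ) : |hyperTerm n| ≤ 4096 / 15 * (1 / 2) ^ n := by
  induction n with
  | zero => rw [hyperTerm_zero]; norm_num [abs_of_pos]
  | succ n ih =>
    rw [hyperTerm_succ, abs_mul, pow_succ, ← mul_assoc]
    exact mul_le_mul ih (abs_hyperRatio_le (by positivity)) (abs_nonneg _) (by positivity)

theorem summable_hyperTerm_mul_pow (k : ℕ) :
    Summable fun n : ℕ => hyperTerm n * ((n : ℝ) + 1) ^ k := by
  have h := (summable_nat_add_iff 1).2
    (summable_pow_mul_geometric_of_norm_lt_one k (r := (1 / 2 : ℝ)) (by norm_num))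
  refine Summable.of_norm_bounded (h.mul_left (8192 / 15)) fun n => ?_
  rw [Real.norm_eq_abs, abs_mul, abs_of_pos (by positivity : (0 : ℝ) < (n + 1) ^ k)]
  refine (mul_le_mul_of_nonneg_right (abs_hyperTerm_le n) (by positivity)).trans (le_of_eq ?_)
  push_cast
  ring

theorem tsum_one_div_add_half_pow {k : ℕ} (hk : 1 < k) :
    ∑' m : ℕ, 1 / (m + 1 / 2 : ℂ) ^ k = (2 ^ k - 1) * riemannZeta k := by
  have hs : Summable fun n : ℕ => 1 / (n : ℂ) ^ k := by
    have := (Complex.summable_one_div_nat_cpow (p := k)).2 (by simpa using hk)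
    simpa only [Complex.cpow_natCast] using this
  have h2 : (2 : ℂ) ^ k ≠ 0 := pow_ne_zero k two_ne_zero
  have he : ∀ m : ℕ, 1 / ((2 * m : ℕ) : ℂ) ^ k = (2 ^ k)⁻¹ * (1 / (m : ℂ) ^ k) := fun m => by
    push_cast; rw [mul_pow, one_div, one_div, mul_inv]
  have ho : ∀ m : ℕ, 1 / ((2 * m + 1 : ℕ) : ℂ) ^ k = (2 ^ k)⁻¹ * (1 / (m + 1 / 2 : ℂ) ^ k) :=
    fun m => by
      push_cast
      rw [show (2 * m + 1 : ℂ) = 2 * (m + 1 / 2) by ring, mul_pow]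
      generalize (m + 1 / 2 : ℂ) ^ k = a
      rw [one_div, one_div, mul_inv]
  have hinj : Function.Injective fun m : ℕ => 2 * m := fun a b h => by simpa using h
  have hinj' : Function.Injective fun m : ℕ => 2 * m + 1 := fun a b h => by simpa using h
  have h := tsum_even_add_odd (f := fun n : ℕ => 1 / (n : ℂ) ^ k) (hs.comp_injective hinj)
    (hs.comp_injective hinj')
  simp only [he, ho, tsum_mul_left] at h
  rw [← zeta_nat_eq_tsum_of_gt_one hk] at h
  rw [← mul_add, inv_mul_eq_iff_eq_mul₀ h2] at h
  linear_combination h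

/-- `∑_{n≥1} (−2^10/5^5)^n (1)ₙ^9 / ((1/2)ₙ^5 (1/5)ₙ (2/5)ₙ (3/5)ₙ (4/5)ₙ) ·
    (30 − 425n + 2275n² − 5600n³ + 5532n⁴)/n^9 = −380928 ζ(5)`. -/
theorem zhao_zeta5_series :
    ∑' n : ℕ, ((((-(2 ^ 10) / 5 ^ 5 : ℝ) ^ (n + 1) * (risingFactorial 1 (n + 1)) ^ 9 /
        ((risingFactorial (1 / 2) (n + 1)) ^ 5 * risingFactorial (1 / 5) (n + 1) *
          risingFactorial (2 / 5) (n + 1) * risingFactorial (3 / 5) (n + 1) *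
          risingFactorial (4 / 5) (n + 1)) *
        (30 - 425 * ((n : ℝ) + 1) + 2275 * ((n : ℝ) + 1) ^ 2 - 5600 * ((n : ℝ) + 1) ^ 3 +
          5532 * ((n : ℝ) + 1) ^ 4) / ((n : ℝ) + 1) ^ 9 : ℝ)) : ℂ)
      = -380928 * riemannZeta 5 := by
  set t : ℕ → ℝ := fun n => hyperTerm n * (30 - 425 * ((n : ℝ) + 1) + 2275 * ((n : ℝ) + 1) ^ 2 -
    5600 * ((n : ℝ) + 1) ^ 3 + 5532 * ((n : ℝ) + 1) ^ 4) with ht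
  have hterm : ∀ n, 64 * (mateCore n 0 * matePoly (n + 1) 0) = (t n : ℂ) := fun n => by
    rw [ht]
    push_cast
    rw [← mateCore_zero_right, matePoly]
    ring
  have hsum : Summable fun n => (t n : ℂ) := by
    rw [Complex.summable_ofReal]
    refine (((((summable_hyperTerm_mul_pow 0).mul_left 30).sub
      ((summable_hyperTerm_mul_pow 1).mul_left 425)).add
      ((summable_hyperTerm_mul_pow 2).mul_left 2275)).sub
      ((summable_hyperTerm_mul_pow 3).mul_left 5600)).add
      ((summable_hyperTerm_mul_pow 4).mul_left 5532) |>.congr fun n => ?_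
    rw [ht]
    ring
  have hhalf : Summable fun m : ℕ => 12288 / (m + 1 / 2 : ℂ) ^ 5 := by
    have := (Complex.summable_ofReal.2 (summable_half_pow (k := 5) (by norm_num))).mul_left 12288
    refine this.congr fun m => ?_
    push_cast
    ring
  have hlim := hsum.hasSum.tendsto_sum_nat.add hhalf.hasSum.tendsto_sum_nat
  have hzero := tendsto_partial_sums
  simp only [hterm] at hzero
  have heq := tendsto_nhds_unique hlim hzero
  have hzeta : ∑' m : ℕ, 12288 / (m + 1 / 2 : ℂ) ^ 5 = 380928 * riemannZeta 5 := by
    have := tsum_one_div_add_half_pow (k := 5) (by norm_num)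
    simp only [div_eq_mul_one_div (12288 : ℂ), tsum_mul_left, this]
    push_cast
    ring
  rw [hzeta] at heq
  rw [neg_mul, ← eq_neg_of_add_eq_zero_left heq]
  refine tsum_congr fun n => congrArg _ ?_
  rw [ht]
  unfold hyperTerm
  ring
end

section
/- The series identity ∑_{n≥0} (1/2^6)^n · ((1/2)_n)^7 / ((1)_n)^7 · (168n³ + 76n² + 14n + 1) = 32/π³ holds. -/
namespace Gourevich

/-- The polynomial factor of the summand of the interpolating series. -/
def numPoly (n x : ℂ) : ℂ :=
  (21 - 276 * x ^ 2 + 1312 * x ^ 4 - 2688 * x ^ 6 + 2304 * x ^ 8 - 1024 * x ^ 10) +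
    (760 - 7568 * x ^ 2 + 25088 * x ^ 4 - 32256 * x ^ 6 + 18432 * x ^ 8 - 4096 * x ^ 10) * n +
    (12628 - 89536 * x ^ 2 + 190848 * x ^ 4 - 150528 * x ^ 6 + 46080 * x ^ 8) * n ^ 2 +
    (126416 - 591360 * x ^ 2 + 770560 * x ^ 4 - 344064 * x ^ 6 + 36864 * x ^ 8) * n ^ 3 +
    (839328 - 2409344 * x ^ 2 + 1809920 * x ^ 4 - 387072 * x ^ 6) * n ^ 4 +
    (3834880 - 6318592 * x ^ 2 + 2494464 * x ^ 4 - 172032 * x ^ 6) * n ^ 5 +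
    (12199040 - 10730496 * x ^ 2 + 1878016 * x ^ 4) * n ^ 6 +
    (26912256 - 11436032 * x ^ 2 + 598016 * x ^ 4) * n ^ 7 +
    (40329472 - 6968320 * x ^ 2) * n ^ 8 +
    (39151616 - 1855488 * x ^ 2) * n ^ 9 +
    22209536 * n ^ 10 +
    5591040 * n ^ 11

/-- The coefficient `(1/2)_{2n} / (2n+1)!^7`. -/
noncomputable def coeff (n : ℕ) : ℝ :=
  risingFactorial (1 / 2) (2 * n) / ((2 * n + 1).factorial : ℝ) ^ 7

/-- The product `(1/2 + x)_n (1/2 - x)_n`. -/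
noncomputable def halfProd (n : ℕ) (x : ℂ) : ℂ :=
  ∏ j ∈ Finset.range n, (((j : ℂ) + 1 / 2) ^ 2 - x ^ 2)

/-- The entire function `1 / (Γ(n + 1 + x) Γ(n + 1 - x))`. -/
noncomputable def invGamma (n : ℕ) (x : ℂ) : ℂ :=
  (Complex.Gamma (n + 1 + x))⁻¹ * (Complex.Gamma (n + 1 - x))⁻¹

/-- The entire function `1 / (Γ(n + 2 + x) Γ(n + 1 - x))`. -/
noncomputable def invGammaShift (n : ℕ) (x : ℂ) : ℂ :=
  (Complex.Gamma (n + 2 + x))⁻¹ * (Complex.Gamma (n + 1 - x))⁻¹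

/-- The summand without its polynomial factor. -/
noncomputable def core (n : ℕ) (x : ℂ) : ℂ :=
  coeff n * halfProd n x ^ 7 * invGamma n x

/-- The summand of the interpolating series; at `x = 1/4` it is, up to a constant, the sum of
two consecutive terms of the Gourevich series. -/
noncomputable def term (n : ℕ) (x : ℂ) : ℂ :=
  numPoly n x * core n x

/-- The certificate that telescopes `term n x + term n (x + 1)`. -/
noncomputable def certificate (n : ℕ) (x : ℂ) : ℂ :=
  4096 * coeff n * (2 * n + 1 / 2) * (2 * n + 3 / 2) * halfProd n x ^ 7 * (n + 1 / 2 + x) ^ 7 *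
    (x + 1 / 2) * ((n + 1) ^ 2 + 3 * (x + 1 / 2) ^ 2) * invGammaShift n x

lemma invGamma_eq_mul_succ (n : ℕ) (x : ℂ) :
    invGamma n x = (((n : ℂ) + 1) ^ 2 - x ^ 2) * invGamma (n + 1) x := by
  have h1 := Complex.one_div_Gamma_eq_self_mul_one_div_Gamma_add_one ((n : ℂ) + 1 + x)
  have h2 := Complex.one_div_Gamma_eq_self_mul_one_div_Gamma_add_one ((n : ℂ) + 1 - x)
  unfold invGamma
  rw [h1, h2]
  push_cast
  rw [show (n : ℂ) + 1 + x + 1 = n + 1 + 1 + x by ring,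
    show (n : ℂ) + 1 - x + 1 = n + 1 + 1 - x by ring]
  ring

lemma invGamma_eq_mul_shift (n : ℕ) (x : ℂ) :
    invGamma n x = (n + 1 + x) * invGammaShift n x := by
  have h1 := Complex.one_div_Gamma_eq_self_mul_one_div_Gamma_add_one ((n : ℂ) + 1 + x)
  unfold invGamma invGammaShift
  rw [h1, show (n : ℂ) + 1 + x + 1 = n + 2 + x by ring]
  ring

lemma invGamma_add_one (n : ℕ) (x : ℂ) :
    invGamma n (x + 1) = (n - x) * invGammaShift n x := by
  have h1 := Complex.one_div_Gamma_eq_self_mul_one_div_Gamma_add_one ((n : ℂ) - x)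
  unfold invGamma invGammaShift
  rw [show (n : ℂ) + 1 - (x + 1) = n - x by ring, h1,
    show (n : ℂ) + 1 + (x + 1) = n + 2 + x by ring, show (n : ℂ) - x + 1 = n + 1 - x by ring]
  ring

lemma invGammaShift_eq_mul_succ (n : ℕ) (x : ℂ) :
    invGammaShift n x = (n + 2 + x) * (n + 1 - x) * invGammaShift (n + 1) x := by
  have h1 := Complex.one_div_Gamma_eq_self_mul_one_div_Gamma_add_one ((n : ℂ) + 2 + x)
  have h2 := Complex.one_div_Gamma_eq_self_mul_one_div_Gamma_add_one ((n : ℂ) + 1 - x)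
  unfold invGammaShift
  rw [h1, h2]
  push_cast
  rw [show (n : ℂ) + 2 + x + 1 = n + 1 + 2 + x by ring,
    show (n : ℂ) + 1 - x + 1 = n + 1 + 1 - x by ring]
  ring

lemma halfProd_succ (n : ℕ) (x : ℂ) :
    halfProd (n + 1) x = halfProd n x * (((n : ℂ) + 1 / 2) ^ 2 - x ^ 2) :=
  Finset.prod_range_succ _ _

lemma halfProd_succ_add_one (n : ℕ) (x : ℂ) :
    halfProd (n + 1) (x + 1) = -halfProd n x * (n + 1 / 2 + x) * (n + 3 / 2 + x) := by
  induction n with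
  | zero => simp [halfProd]; ring
  | succ n ih =>
    rw [halfProd_succ (n + 1), ih, halfProd_succ n]
    push_cast
    ring

lemma coeff_eq_mul_succ (n : ℕ) :
    coeff n * ((2 * n + 1 / 2) * (2 * n + 3 / 2)) =
      coeff (n + 1) * ((2 * n + 2) * (2 * n + 3)) ^ 7 := by
  have h : risingFactorial (1 / 2) (2 * (n + 1)) =
      risingFactorial (1 / 2) (2 * n) * (2 * n + 1 / 2) * (2 * n + 3 / 2) := by
    unfold risingFactorial
    rw [show 2 * (n + 1) = 2 * n + 1 + 1 by ring, Finset.prod_range_succ, Finset.prod_range_succ]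
    push_cast
    ring
  have h' : ((2 * (n + 1) + 1).factorial : ℝ) =
      (2 * n + 2) * (2 * n + 3) * (2 * n + 1).factorial := by
    rw [show 2 * (n + 1) + 1 = 2 * n + 1 + 1 + 1 by ring, Nat.factorial_succ, Nat.factorial_succ]
    push_cast
    ring
  unfold coeff
  rw [h, h']
  have : ((2 * n + 1).factorial : ℝ) ≠ 0 := by positivity
  have h2 : (2 * (n : ℝ) + 2) ≠ 0 := by positivity
  have h3 : (2 * (n : ℝ) + 3) ≠ 0 := by positivity
  field_simp

lemma numPoly_telescope (n x : ℂ) :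
    numPoly n x * (n - 1 / 2 - x) ^ 7 * (n + 1 + x) -
        numPoly n (x + 1) * (n + 1 / 2 + x) ^ 7 * (n - x) =
      4096 * (2 * n + 1 / 2) * (2 * n + 3 / 2) * (n + 1 / 2 + x) ^ 7 * (n - 1 / 2 - x) ^ 7 *
          (x + 1 / 2) * ((n + 1) ^ 2 + 3 * (x + 1 / 2) ^ 2) -
        4096 * (2 * n * (2 * n + 1)) ^ 7 * (x + 1 / 2) * (n ^ 2 + 3 * (x + 1 / 2) ^ 2) *
          (n + 1 + x) * (n - x) := by
  unfold numPoly
  ring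

lemma term_zero_add (x : ℂ) : term 0 x + term 0 (x + 1) = certificate 0 x := by
  simp only [term, core, certificate, invGamma_add_one, invGamma_eq_mul_shift _ x, numPoly,
    halfProd, Finset.prod_range_zero]
  push_cast
  ring

lemma term_succ_add (n : ℕ) (x : ℂ) :
    term (n + 1) x + term (n + 1) (x + 1) = certificate (n + 1) x - certificate n x := by
  have hc : (coeff n : ℂ) * ((2 * n + 1 / 2) * (2 * n + 3 / 2)) =
      coeff (n + 1) * ((2 * n + 2) * (2 * n + 3)) ^ 7 := by
    have := congrArg (fun r : ℝ => (r : ℂ)) (coeff_eq_mul_succ n)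
    push_cast at this
    exact this
  have h := numPoly_telescope (n + 1) x
  have hcert : certificate n x = 4096 * (coeff (n + 1) * ((2 * n + 2) * (2 * n + 3)) ^ 7) *
      halfProd n x ^ 7 * (n + 1 / 2 + x) ^ 7 * (x + 1 / 2) *
      ((n + 1) ^ 2 + 3 * (x + 1 / 2) ^ 2) *
      ((n + 2 + x) * (n + 1 - x) * invGammaShift (n + 1) x) := by
    rw [← hc, ← invGammaShift_eq_mul_succ, certificate]
    ring
  rw [hcert]
  simp only [term, core, certificate, invGamma_add_one, invGamma_eq_mul_shift _ x,
    halfProd_succ n x, halfProd_succ_add_one, Nat.cast_add, Nat.cast_one]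
  linear_combination (coeff (n + 1) : ℂ) * halfProd n x ^ 7 * (n + 1 / 2 + x) ^ 7 *
    invGammaShift (n + 1) x * h

lemma sum_term_add (n : ℕ) (x : ℂ) :
    ∑ i ∈ Finset.range (n + 1), (term i x + term i (x + 1)) = certificate n x := by
  induction n with
  | zero => simp [term_zero_add]
  | succ n ih => rw [Finset.sum_range_succ, ih, term_succ_add]; ring

lemma prod_sq_add_le (n : ℕ) {v : ℝ} (hv : 0 ≤ v) :
    ∏ j ∈ Finset.range n, (((j : ℝ) + 1) ^ 2 + 2 * v ^ 2) ≤
      (n.factorial : ℝ) ^ 2 * 3 ^ n * Real.exp (2 * v) := by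
  induction n with
  | zero => simpa using hv
  | succ n ih =>
    rcases le_or_gt ((n : ℝ) + 1) v with h | h
    · have h1 : ∏ j ∈ Finset.range (n + 1), (((j : ℝ) + 1) ^ 2 + 2 * v ^ 2) ≤
          ∏ j ∈ Finset.range (n + 1), (3 * v ^ 2) := by
        refine Finset.prod_le_prod (fun j _ => by positivity) fun j hj => ?_
        have hj' : (j : ℝ) ≤ n := by
          exact_mod_cast Nat.lt_succ_iff.mp (Finset.mem_range.mp hj)
        have : ((j : ℝ) + 1) ^ 2 ≤ v ^ 2 := by gcongr; linarith
        linarith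
      have h2 : v ^ (n + 1) ≤ (n + 1).factorial * Real.exp v := by
        have := Real.pow_div_factorial_le_exp v hv (n + 1)
        rw [div_le_iff₀ (by positivity)] at this
        linarith
      calc _ ≤ _ := h1
        _ = 3 ^ (n + 1) * (v ^ (n + 1)) ^ 2 := by
          rw [Finset.prod_const, Finset.card_range, mul_pow]; ring
        _ ≤ 3 ^ (n + 1) * ((n + 1).factorial * Real.exp v) ^ 2 := by gcongr
        _ = _ := by rw [mul_pow, ← Real.exp_nat_mul]; push_cast; ring
    · rw [Finset.prod_range_succ, Nat.factorial_succ]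
      have h1 : ((n : ℝ) + 1) ^ 2 + 2 * v ^ 2 ≤ 3 * ((n : ℝ) + 1) ^ 2 := by
        have : v ^ 2 ≤ ((n : ℝ) + 1) ^ 2 := by gcongr
        linarith
      calc _ ≤ ((n.factorial : ℝ) ^ 2 * 3 ^ n * Real.exp (2 * v)) * (3 * ((n : ℝ) + 1) ^ 2) := by
            gcongr
        _ = _ := by push_cast; ring

lemma prod_sq_add_sq_le (n : ℕ) {w : ℝ} (hw : 0 ≤ w) :
    ∏ j ∈ Finset.range n, (((j : ℝ) + 1) ^ 2 + w ^ 2) ≤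
      (n.factorial : ℝ) ^ 2 * 3 ^ n * Real.exp (3 / 2 * w) := by
  calc _ ≤ ∏ j ∈ Finset.range n, (((j : ℝ) + 1) ^ 2 + 2 * (3 / 4 * w) ^ 2) := by
        refine Finset.prod_le_prod (fun j _ => by positivity) fun j _ => ?_
        nlinarith [sq_nonneg w]
    _ ≤ _ := prod_sq_add_le n (by positivity)
    _ = _ := by ring_nf

lemma norm_halfProd_le (n : ℕ) {x : ℂ} {w : ℝ} (hw : 0 ≤ w)
    (h : ∀ j : ℕ, ‖((j : ℂ) + 1 / 2) ^ 2 - x ^ 2‖ ≤ ((j : ℝ) + 1) ^ 2 + w ^ 2) :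
    ‖halfProd n x‖ ≤ (n.factorial : ℝ) ^ 2 * 3 ^ n * Real.exp (3 / 2 * w) := by
  rw [halfProd, norm_prod]
  exact (Finset.prod_le_prod (fun _ _ => norm_nonneg _) fun j _ => h j).trans
    (prod_sq_add_sq_le n hw)

lemma norm_halfProd_succ_le (n : ℕ) {x : ℂ} {w : ℝ} (hw : 0 ≤ w)
    (h : ∀ j : ℕ, ‖((j : ℂ) + 1 / 2) ^ 2 - x ^ 2‖ ≤ ((j : ℝ) + 1) ^ 2 + w ^ 2) :
    ‖halfProd (n + 1) x‖ ≤ ‖1 / 4 - x ^ 2‖ *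
      (((n + 1).factorial : ℝ) ^ 2 * 3 ^ (n + 1) * Real.exp (3 / 2 * w)) := by
  have h0 := prod_sq_add_sq_le (n + 1) hw
  rw [Finset.prod_range_succ'] at h0
  rw [halfProd, norm_prod, Finset.prod_range_succ', mul_comm]
  have e : ((0 : ℕ) : ℂ) + 1 / 2 = 1 / 2 := by simp
  rw [e, show ((1 : ℂ) / 2) ^ 2 = 1 / 4 by norm_num]
  gcongr
  refine le_trans ?_ h0
  have h1 : ∏ k ∈ Finset.range n, ‖(((k + 1 : ℕ) : ℂ) + 1 / 2) ^ 2 - x ^ 2‖ ≤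
      ∏ k ∈ Finset.range n, ((((k + 1 : ℕ) : ℝ) + 1) ^ 2 + w ^ 2) :=
    Finset.prod_le_prod (fun _ _ => norm_nonneg _) fun j _ => h (j + 1)
  refine h1.trans (le_mul_of_one_le_right (Finset.prod_nonneg fun j _ => by positivity) ?_)
  have := sq_nonneg w
  push_cast
  linarith

lemma risingFactorial_half_le (n : ℕ) : risingFactorial (1 / 2) n ≤ n.factorial := by
  rw [risingFactorial, ← Finset.prod_range_add_one_eq_factorial]
  push_cast
  refine Finset.prod_le_prod (fun j _ => by positivity) fun j _ => by linarith

lemma risingFactorial_half_nonneg (n : ℕ) : 0 ≤ risingFactorial (1 / 2) n :=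
  Finset.prod_nonneg fun j _ => by positivity

lemma four_pow_mul_factorial_sq_le (n : ℕ) :
    4 ^ n * n.factorial ^ 2 ≤ (2 * n + 1).factorial := by
  induction n with
  | zero => simp
  | succ n ih =>
    rw [show 2 * (n + 1) + 1 = 2 * n + 1 + 1 + 1 by ring, Nat.factorial_succ (2 * n + 1 + 1),
      Nat.factorial_succ (2 * n + 1), Nat.factorial_succ n]
    calc 4 ^ (n + 1) * ((n + 1) * n.factorial) ^ 2
        = (2 * n + 2) * (2 * n + 2) * (4 ^ n * n.factorial ^ 2) := by ring
      _ ≤ (2 * n + 3) * (2 * n + 2) * (2 * n + 1).factorial := by gcongr; omega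
      _ = _ := by ring

lemma coeff_nonneg (n : ℕ) : 0 ≤ coeff n :=
  div_nonneg (risingFactorial_half_nonneg _) (by positivity)

lemma coeff_mul_pow_le (n : ℕ) {a c : ℝ} (ha : 0 ≤ a)
    (h : a ≤ (n.factorial : ℝ) ^ 2 * 3 ^ n * c) :
    coeff n * a ^ 6 ≤ (3 / 4) ^ (6 * n) * c ^ 6 := by
  have hf : (4 : ℝ) ^ n * (n.factorial : ℝ) ^ 2 ≤ ((2 * n + 1).factorial : ℝ) := by
    exact_mod_cast four_pow_mul_factorial_sq_le n
  have h1 : risingFactorial (1 / 2) (2 * n) ≤ ((2 * n + 1).factorial : ℝ) :=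
    (risingFactorial_half_le _).trans (by exact_mod_cast Nat.factorial_le (by omega))
  have hpos : (0 : ℝ) < ((2 * n + 1).factorial : ℝ) := by positivity
  have hc : coeff n ≤ 1 / ((4 : ℝ) ^ n * (n.factorial : ℝ) ^ 2) ^ 6 := by
    calc coeff n ≤ ((2 * n + 1).factorial : ℝ) / ((2 * n + 1).factorial : ℝ) ^ 7 := by
          unfold coeff; gcongr
      _ = 1 / ((2 * n + 1).factorial : ℝ) ^ 6 := by field_simp
      _ ≤ _ := by gcongr
  calc coeff n * a ^ 6
      ≤ 1 / ((4 : ℝ) ^ n * (n.factorial : ℝ) ^ 2) ^ 6 *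
        ((n.factorial : ℝ) ^ 2 * 3 ^ n * c) ^ 6 := by
        gcongr
    _ = _ := by
      have : (n.factorial : ℝ) ≠ 0 := by positivity
      rw [pow_mul', div_pow]
      field_simp

lemma norm_core (n : ℕ) (x : ℂ) :
    ‖core n x‖ = coeff n * ‖halfProd n x‖ ^ 6 * ‖halfProd n x * invGamma n x‖ := by
  rw [core, norm_mul, norm_mul, norm_mul, norm_pow, Complex.norm_real, Real.norm_eq_abs,
    abs_of_nonneg (coeff_nonneg n)]
  ring

lemma norm_sq_sub_sq_le {x : ℂ} {R : ℝ} (hx : ‖x‖ ≤ R) (j : ℕ) :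
    ‖((j : ℂ) + 1 / 2) ^ 2 - x ^ 2‖ ≤ ((j : ℝ) + 1) ^ 2 + R ^ 2 := by
  refine (norm_sub_le _ _).trans ?_
  rw [norm_pow, norm_pow]
  have : ‖(j : ℂ) + 1 / 2‖ ≤ (j : ℝ) + 1 := by
    refine (norm_add_le _ _).trans ?_
    rw [Complex.norm_natCast]
    norm_num
  gcongr

lemma differentiable_invGamma (n : ℕ) : Differentiable ℂ (invGamma n) := by
  have h := Complex.differentiable_one_div_Gamma
  unfold invGamma
  exact (h.comp (by fun_prop)).mul (h.comp (by fun_prop))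

lemma differentiable_halfProd (n : ℕ) : Differentiable ℂ (halfProd n) := by
  unfold halfProd
  fun_prop

lemma norm_halfProd_mul_invGamma_succ_le {n : ℕ} {x : ℂ} {R : ℝ} (hx : ‖x‖ ≤ R)
    (hn : 3 * R ^ 2 ≤ ((n : ℝ) + 1) ^ 2) :
    ‖halfProd (n + 1) x * invGamma (n + 1) x‖ ≤ 2 * ‖halfProd n x * invGamma n x‖ := by
  rw [halfProd_succ, invGamma_eq_mul_succ n]
  have h1 := norm_sq_sub_sq_le hx n
  have h2 : ((n : ℝ) + 1) ^ 2 - R ^ 2 ≤ ‖((n : ℂ) + 1) ^ 2 - x ^ 2‖ := by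
    have h3 := norm_sub_norm_le (((n : ℂ) + 1) ^ 2) (x ^ 2)
    have h4 : ‖((n : ℂ) + 1) ^ 2‖ = ((n : ℝ) + 1) ^ 2 := by
      rw [norm_pow]; norm_cast
    have h5 : ‖x ^ 2‖ ≤ R ^ 2 := by rw [norm_pow]; gcongr
    linarith
  have h6 : ‖((n : ℂ) + 1 / 2) ^ 2 - x ^ 2‖ ≤ 2 * ‖((n : ℂ) + 1) ^ 2 - x ^ 2‖ := by linarith
  simp only [norm_mul]
  calc _ = ‖halfProd n x‖ * ‖invGamma (n + 1) x‖ * ‖((n : ℂ) + 1 / 2) ^ 2 - x ^ 2‖ := by ring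
    _ ≤ ‖halfProd n x‖ * ‖invGamma (n + 1) x‖ * (2 * ‖((n : ℂ) + 1) ^ 2 - x ^ 2‖) := by gcongr
    _ = _ := by ring

lemma exists_norm_halfProd_mul_invGamma_le (R : ℝ) :
    ∃ C : ℝ, 0 ≤ C ∧ ∀ (n : ℕ) (x : ℂ), ‖x‖ ≤ R →
      ‖halfProd n x * invGamma n x‖ ≤ C * 2 ^ n := by
  have hb : ∀ n : ℕ, ∃ C : ℝ, ∀ x : ℂ, ‖x‖ ≤ R → ‖halfProd n x * invGamma n x‖ ≤ C := fun n => by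
    obtain ⟨C, hC⟩ := (isCompact_closedBall (0 : ℂ) R).exists_bound_of_continuousOn
      ((differentiable_halfProd n).mul (differentiable_invGamma n)).continuous.continuousOn
    exact ⟨C, fun x hx => hC x (by simpa using hx)⟩
  choose C hC using hb
  obtain ⟨J, hJ⟩ := exists_nat_ge (3 * R ^ 2)
  refine ⟨∑ i ∈ Finset.range (J + 1), |C i|, by positivity, fun n x hx => ?_⟩
  have hsmall : ∀ m ≤ J, ‖halfProd m x * invGamma m x‖ ≤
      (∑ i ∈ Finset.range (J + 1), |C i|) * 2 ^ m := fun m hm => by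
    refine ((hC m x hx).trans (le_abs_self _)).trans ?_
    refine (Finset.single_le_sum (f := fun i => |C i|) (fun i _ => abs_nonneg _)
      (Finset.mem_range.mpr (Nat.lt_succ_of_le hm))).trans ?_
    exact le_mul_of_one_le_right (by positivity) (one_le_pow₀ one_le_two)
  rcases le_total n J with h | h
  · exact hsmall n h
  · induction n, h using Nat.le_induction with
    | base => exact hsmall J le_rfl
    | succ m hm ih =>
      have hm' : (J : ℝ) ≤ m := by exact_mod_cast hm
      have := norm_halfProd_mul_invGamma_succ_le (n := m) hx (by nlinarith)
      rw [pow_succ]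
      linarith

lemma exists_norm_core_le {R : ℝ} (hR : 0 ≤ R) :
    ∃ C : ℝ, 0 ≤ C ∧ ∀ (n : ℕ) (x : ℂ), ‖x‖ ≤ R → ‖core n x‖ ≤ C * (1 / 2) ^ n ∧
      ‖core (n + 1) x‖ ≤ ‖1 / 4 - x ^ 2‖ ^ 6 * (C * (1 / 2) ^ (n + 1)) := by
  obtain ⟨C, hC0, hC⟩ := exists_norm_halfProd_mul_invGamma_le R
  have key : ∀ n : ℕ, (3 / 4 : ℝ) ^ (6 * n) * 2 ^ n ≤ (1 / 2) ^ n := fun n => by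
    rw [pow_mul, ← mul_pow]
    gcongr
    norm_num
  refine ⟨Real.exp (3 / 2 * R) ^ 6 * C, by positivity, fun n x hx => ⟨?_, ?_⟩⟩
  · rw [norm_core]
    have h1 := coeff_mul_pow_le n (norm_nonneg _)
      (norm_halfProd_le n hR (norm_sq_sub_sq_le hx))
    calc _ ≤ (3 / 4) ^ (6 * n) * Real.exp (3 / 2 * R) ^ 6 * (C * 2 ^ n) := by
          gcongr; exact hC n x hx
      _ = Real.exp (3 / 2 * R) ^ 6 * C * ((3 / 4) ^ (6 * n) * 2 ^ n) := by ring
      _ ≤ _ := by gcongr; exact key n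
  · rw [norm_core]
    have h1 := coeff_mul_pow_le (n + 1) (c := ‖1 / 4 - x ^ 2‖ * Real.exp (3 / 2 * R))
      (norm_nonneg _)
      ((norm_halfProd_succ_le n hR (norm_sq_sub_sq_le hx)).trans_eq (by ring))
    calc _ ≤ (3 / 4) ^ (6 * (n + 1)) * (‖1 / 4 - x ^ 2‖ * Real.exp (3 / 2 * R)) ^ 6 *
          (C * 2 ^ (n + 1)) := by
          gcongr; exact hC (n + 1) x hx
      _ = ‖1 / 4 - x ^ 2‖ ^ 6 * (Real.exp (3 / 2 * R) ^ 6 * C *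
          ((3 / 4) ^ (6 * (n + 1)) * 2 ^ (n + 1))) := by ring
      _ ≤ _ := by gcongr; exact key (n + 1)

/-- Polynomial growth in the summation index and the variable. -/
def PolyGrowth (f : ℕ → ℂ → ℂ) : Prop :=
  ∃ (C : ℝ) (k : ℕ), 0 ≤ C ∧ ∀ n x, ‖f n x‖ ≤ C * (((n : ℝ) + 1) * (1 + ‖x‖)) ^ k

namespace PolyGrowth

lemma one_le_base (n : ℕ) (x : ℂ) : 1 ≤ ((n : ℝ) + 1) * (1 + ‖x‖) := by
  have h1 : (0 : ℝ) ≤ n := n.cast_nonneg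
  nlinarith [norm_nonneg x, mul_nonneg h1 (norm_nonneg x)]

lemma const (c : ℂ) : PolyGrowth fun _ _ => c :=
  ⟨‖c‖, 0, norm_nonneg _, fun n x => by simp⟩

lemma index : PolyGrowth fun n _ => (n : ℂ) :=
  ⟨1, 1, zero_le_one, fun n x => by
    rw [Complex.norm_natCast]
    have h1 : (0 : ℝ) ≤ n := n.cast_nonneg
    nlinarith [norm_nonneg x, mul_nonneg h1 (norm_nonneg x)]⟩

lemma arg : PolyGrowth fun _ x => x :=
  ⟨1, 1, zero_le_one, fun n x => by
    have h1 : (0 : ℝ) ≤ n := n.cast_nonneg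
    nlinarith [norm_nonneg x, mul_nonneg h1 (norm_nonneg x)]⟩

lemma add {f g : ℕ → ℂ → ℂ} (hf : PolyGrowth f) (hg : PolyGrowth g) :
    PolyGrowth fun n x => f n x + g n x := by
  obtain ⟨C, k, hC, hf⟩ := hf
  obtain ⟨D, l, hD, hg⟩ := hg
  refine ⟨C + D, max k l, by positivity, fun n x => ?_⟩
  have hb := one_le_base n x
  calc ‖f n x + g n x‖ ≤ ‖f n x‖ + ‖g n x‖ := norm_add_le _ _
    _ ≤ C * (((n : ℝ) + 1) * (1 + ‖x‖)) ^ k + D * (((n : ℝ) + 1) * (1 + ‖x‖)) ^ l :=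
      add_le_add (hf n x) (hg n x)
    _ ≤ C * (((n : ℝ) + 1) * (1 + ‖x‖)) ^ max k l +
        D * (((n : ℝ) + 1) * (1 + ‖x‖)) ^ max k l := by
      gcongr
      · exact le_max_left _ _
      · exact le_max_right _ _
    _ = _ := by ring

lemma mul {f g : ℕ → ℂ → ℂ} (hf : PolyGrowth f) (hg : PolyGrowth g) :
    PolyGrowth fun n x => f n x * g n x := by
  obtain ⟨C, k, hC, hf⟩ := hf
  obtain ⟨D, l, hD, hg⟩ := hg
  refine ⟨C * D, k + l, by positivity, fun n x => ?_⟩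
  rw [norm_mul, pow_add]
  calc _ ≤ (C * (((n : ℝ) + 1) * (1 + ‖x‖)) ^ k) * (D * (((n : ℝ) + 1) * (1 + ‖x‖)) ^ l) := by
        gcongr
        · exact hf n x
        · exact hg n x
    _ = _ := by ring

lemma sub {f g : ℕ → ℂ → ℂ} (hf : PolyGrowth f) (hg : PolyGrowth g) :
    PolyGrowth fun n x => f n x - g n x := by
  simpa [sub_eq_add_neg] using hf.add ((const (-1)).mul hg)

lemma pow {f : ℕ → ℂ → ℂ} (hf : PolyGrowth f) (m : ℕ) :
    PolyGrowth fun n x => f n x ^ m := by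
  induction m with
  | zero => simpa using const 1
  | succ m ih => simpa only [pow_succ] using ih.mul hf

/-- A factor of polynomial growth preserves summability against a geometric bound. -/
lemma exists_summable_bound {f : ℕ → ℂ → ℂ} (hf : PolyGrowth f) :
    ∃ (k : ℕ) (u : ℕ → ℝ), Summable u ∧ (∀ n, 0 ≤ u n) ∧
      ∀ n x, ‖f n x‖ * (1 / 2) ^ n ≤ (1 + ‖x‖) ^ k * u n := by
  obtain ⟨C, k, hC, hf⟩ := hf
  have hs : Summable fun n : ℕ => ((n : ℝ) + 1) ^ k * (1 / 2 : ℝ) ^ n := by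
    have h := (summable_nat_add_iff 1).mpr
      (summable_pow_mul_geometric_of_norm_lt_one (R := ℝ) k (r := 1 / 2) (by norm_num))
    refine (h.mul_left 2).congr fun n => ?_
    push_cast
    ring
  refine ⟨k, fun n => C * (((n : ℝ) + 1) ^ k * (1 / 2 : ℝ) ^ n), hs.mul_left _,
    fun n => by positivity, fun n x => ?_⟩
  calc _ ≤ C * (((n : ℝ) + 1) * (1 + ‖x‖)) ^ k * (1 / 2) ^ n := by gcongr; exact hf n x
    _ = _ := by rw [mul_pow]; ring

lemma exists_summable_bound_of_norm_le {f : ℕ → ℂ → ℂ} (hf : PolyGrowth f) (R : ℝ) :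
    ∃ u : ℕ → ℝ, Summable u ∧ (∀ n, 0 ≤ u n) ∧ ∀ n x, ‖x‖ ≤ R → ‖f n x‖ * (1 / 2) ^ n ≤ u n := by
  obtain ⟨k, u, hu, hu0, hbound⟩ := hf.exists_summable_bound
  refine ⟨fun n => (1 + |R|) ^ k * u n, hu.mul_left _, fun n => mul_nonneg (by positivity) (hu0 n),
    fun n x hx => (hbound n x).trans ?_⟩
  have := hx.trans (le_abs_self R)
  have := hu0 n
  dsimp only
  gcongr

end PolyGrowth

lemma polyGrowth_numPoly : PolyGrowth fun n x => numPoly n x := by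
  unfold numPoly
  repeat' with_reducible first
    | exact PolyGrowth.const _
    | exact PolyGrowth.index
    | exact PolyGrowth.arg
    | refine PolyGrowth.add ?_ ?_
    | refine PolyGrowth.sub ?_ ?_
    | refine PolyGrowth.mul ?_ ?_
    | refine PolyGrowth.pow ?_ _

/-- The interpolating series. -/
noncomputable def series (x : ℂ) : ℂ := ∑' n, term n x

lemma exists_term_bound {R : ℝ} (hR : 0 ≤ R) :
    ∃ u : ℕ → ℝ, Summable u ∧ (∀ n, 0 ≤ u n) ∧ ∀ n x, ‖x‖ ≤ R → ‖term n x‖ ≤ u n ∧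
      ‖term (n + 1) x‖ ≤ ‖1 / 4 - x ^ 2‖ ^ 6 * u (n + 1) := by
  obtain ⟨C, hC, hcore⟩ := exists_norm_core_le hR
  obtain ⟨u, hu, hu0, hbound⟩ := polyGrowth_numPoly.exists_summable_bound_of_norm_le R
  refine ⟨fun n => C * u n, hu.mul_left C, fun n => mul_nonneg hC (hu0 n),
    fun n x hx => ⟨?_, ?_⟩⟩
  · rw [term, norm_mul]
    calc _ ≤ ‖numPoly n x‖ * (C * (1 / 2) ^ n) := by gcongr; exact (hcore n x hx).1
      _ = C * (‖numPoly n x‖ * (1 / 2) ^ n) := by ring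
      _ ≤ _ := mul_le_mul_of_nonneg_left (hbound n x hx) hC
  · rw [term, norm_mul]
    calc _ ≤ ‖numPoly (n + 1 : ℕ) x‖ * (‖1 / 4 - x ^ 2‖ ^ 6 * (C * (1 / 2) ^ (n + 1))) := by
          gcongr; exact (hcore n x hx).2
      _ = ‖1 / 4 - x ^ 2‖ ^ 6 * (C * (‖numPoly (n + 1 : ℕ) x‖ * (1 / 2) ^ (n + 1))) := by ring
      _ ≤ _ := by
        refine mul_le_mul_of_nonneg_left ?_ (by positivity)
        exact mul_le_mul_of_nonneg_left (hbound (n + 1) x hx) hC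

lemma summable_term (x : ℂ) : Summable fun n => term n x := by
  obtain ⟨u, hu, -, h⟩ := exists_term_bound (norm_nonneg x)
  exact Summable.of_norm_bounded hu fun n => (h n x le_rfl).1

lemma differentiable_term (n : ℕ) : Differentiable ℂ (term n) := by
  have h1 := differentiable_halfProd n
  have h2 := differentiable_invGamma n
  unfold term core numPoly
  fun_prop

lemma differentiable_series : Differentiable ℂ series := by
  intro x
  obtain ⟨u, hu, -, h⟩ := exists_term_bound (R := ‖x‖ + 1) (by positivity)
  have hd : DifferentiableOn ℂ series (Metric.ball 0 (‖x‖ + 1)) :=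
    Complex.differentiableOn_tsum_of_summable_norm hu
      (fun n => (differentiable_term n).differentiableOn) Metric.isOpen_ball
      fun n w hw => (h n w (by simpa using (mem_ball_zero_iff.mp hw).le)).1
  exact hd.differentiableAt (Metric.isOpen_ball.mem_nhds (by simp))

lemma tendsto_certificate (x : ℂ) :
    Filter.Tendsto (fun n => certificate n x) Filter.atTop (nhds 0) := by
  let f : ℕ → ℂ → ℂ := fun n x => 4096 * (2 * n + 1 / 2) * (2 * n + 3 / 2) *
    (n + 1 / 2 + x) ^ 7 * (x + 1 / 2) * ((n + 1) ^ 2 + 3 * (x + 1 / 2) ^ 2)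
  have hf : PolyGrowth f := by
    repeat' with_reducible first
      | exact PolyGrowth.const _
      | exact PolyGrowth.index
      | exact PolyGrowth.arg
      | refine PolyGrowth.add ?_ ?_
      | refine PolyGrowth.mul ?_ ?_
      | refine PolyGrowth.pow ?_ _
  obtain ⟨C, hC, hcore⟩ := exists_norm_core_le (norm_nonneg x)
  obtain ⟨u, hu, -, hbound⟩ := hf.exists_summable_bound_of_norm_le ‖x‖
  have hlim : Filter.Tendsto (fun n => C * u n) Filter.atTop (nhds 0) := by
    simpa using hu.tendsto_atTop_zero.const_mul C
  refine squeeze_zero_norm' ?_ hlim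
  obtain ⟨J, hJ⟩ := exists_nat_ge ‖x‖
  filter_upwards [Filter.eventually_ge_atTop J] with n hn
  have hn' : (J : ℝ) ≤ n := by exact_mod_cast hn
  have h1 : (1 : ℝ) ≤ ‖(n : ℂ) + 1 + x‖ := by
    have h2 := norm_sub_norm_le ((n : ℂ) + 1) (-x)
    have h3 : ‖(n : ℂ) + 1‖ = (n : ℝ) + 1 := by norm_cast
    rw [norm_neg, sub_neg_eq_add] at h2
    linarith
  have h2 : ‖invGammaShift n x‖ ≤ ‖invGamma n x‖ := by
    rw [invGamma_eq_mul_shift, norm_mul]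
    exact le_mul_of_one_le_left (norm_nonneg _) h1
  have h3 : certificate n x = f n x * (coeff n * halfProd n x ^ 7 * invGammaShift n x) := by
    simp only [certificate, f]
    ring
  have h4 : ‖coeff n * halfProd n x ^ 7 * invGammaShift n x‖ ≤ ‖core n x‖ := by
    rw [core, norm_mul, norm_mul _ (invGamma n x)]
    gcongr
  calc ‖certificate n x‖ ≤ ‖f n x‖ * (C * (1 / 2) ^ n) := by
        rw [h3, norm_mul]
        gcongr
        exact h4.trans (hcore n x le_rfl).1
    _ = C * (‖f n x‖ * (1 / 2) ^ n) := by ring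
    _ ≤ _ := by gcongr; exact hbound n x le_rfl

lemma series_add_one (x : ℂ) : series (x + 1) = -series x := by
  have h := ((summable_term x).add (summable_term (x + 1))).hasSum.tendsto_sum_nat
  have h' := (Filter.tendsto_add_atTop_iff_nat 1).mpr h
  simp only [sum_term_add] at h'
  have h0 := tendsto_nhds_unique h' (tendsto_certificate x)
  rw [(summable_term x).tsum_add (summable_term (x + 1))] at h0
  exact eq_neg_of_add_eq_zero_right h0

lemma differentiable_dslope {f : ℂ → ℂ} (hf : Differentiable ℂ f) (a : ℂ) :
    Differentiable ℂ (dslope f a) :=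
  differentiableOn_univ.mp ((Complex.differentiableOn_dslope Filter.univ_mem).mpr
    hf.differentiableOn)

lemma hasDerivAt_cos_pi_mul (x : ℂ) :
    HasDerivAt (fun x : ℂ => Complex.cos (Real.pi * x))
      (-Complex.sin (Real.pi * x) * Real.pi) x := by
  simpa using ((hasDerivAt_id x).const_mul (Real.pi : ℂ)).ccos

lemma differentiable_cos_pi_mul : Differentiable ℂ fun x : ℂ => Complex.cos (Real.pi * x) :=
  fun x => (hasDerivAt_cos_pi_mul x).differentiableAt

lemma deriv_cos_pi_mul_ne_zero {a : ℂ} (ha : Complex.cos (Real.pi * a) = 0) :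
    deriv (fun x : ℂ => Complex.cos (Real.pi * x)) a ≠ 0 := by
  rw [(hasDerivAt_cos_pi_mul a).deriv]
  have h : Complex.sin (Real.pi * a) ≠ 0 := fun h => by
    simpa [ha, h] using Complex.sin_sq_add_cos_sq (Real.pi * a)
  simp [h]

lemma dslope_cos_pi_mul {a x : ℂ} (ha : Complex.cos (Real.pi * a) = 0) (hx : x ≠ a) :
    dslope (fun x : ℂ => Complex.cos (Real.pi * x)) a x =
      Complex.cos (Real.pi * x) / (x - a) := by
  rw [dslope_of_ne _ hx, slope_def_field]
  simp only [ha, sub_zero]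

lemma cos_pi_mul_half : Complex.cos (Real.pi * (1 / 2)) = 0 := by
  rw [mul_one_div, Complex.cos_pi_div_two]

lemma cos_pi_mul_add_one (x : ℂ) :
    Complex.cos (Real.pi * (x + 1)) = -Complex.cos (Real.pi * x) := by
  rw [mul_add, mul_one, Complex.cos_add_pi]

/-- The quotient `f / cos (π x)`, with its value at the zeros of the cosine filled in. -/
noncomputable def cosQuotient (f : ℂ → ℂ) (x : ℂ) : ℂ :=
  open Classical in
  if Complex.cos (Real.pi * x) = 0 then
    deriv f x / deriv (fun x : ℂ => Complex.cos (Real.pi * x)) x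
  else f x / Complex.cos (Real.pi * x)

lemma cosQuotient_of_ne {f : ℂ → ℂ} {x : ℂ} (h : Complex.cos (Real.pi * x) ≠ 0) :
    cosQuotient f x = f x / Complex.cos (Real.pi * x) :=
  if_neg h

lemma differentiable_cosQuotient {f : ℂ → ℂ} (hf : Differentiable ℂ f)
    (h0 : ∀ x, Complex.cos (Real.pi * x) = 0 → f x = 0) :
    Differentiable ℂ (cosQuotient f) := by
  intro a
  have hc := differentiable_cos_pi_mul
  by_cases ha : Complex.cos (Real.pi * a) = 0
  · set c : ℂ → ℂ := fun x => Complex.cos (Real.pi * x)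
    have hca : dslope c a a ≠ 0 := by
      rw [dslope_same]
      exact deriv_cos_pi_mul_ne_zero ha
    have hd : DifferentiableAt ℂ (fun x => dslope f a x / dslope c a x) a :=
      (differentiable_dslope hf a a).div (differentiable_dslope hc a a) hca
    refine hd.congr_of_eventuallyEq ?_
    filter_upwards [(differentiable_dslope hc a).continuous.continuousAt.eventually_ne hca]
      with x hx
    rcases eq_or_ne x a with rfl | hxa
    · rw [dslope_same, dslope_same, cosQuotient, if_pos ha]
    · have hsub : x - a ≠ 0 := sub_ne_zero.mpr hxa
      have hcx : dslope c a x = Complex.cos (Real.pi * x) / (x - a) := dslope_cos_pi_mul ha hxa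
      have hfx : dslope f a x = f x / (x - a) := by
        rw [dslope_of_ne _ hxa, slope_def_field, h0 a ha, sub_zero]
      have hx' : Complex.cos (Real.pi * x) ≠ 0 := fun h => hx (by rw [hcx, h, zero_div])
      rw [cosQuotient_of_ne hx', hcx, hfx]
      field_simp
  · refine ((hf a).div (hc a) ha).congr_of_eventuallyEq ?_
    filter_upwards [hc.continuous.continuousAt.eventually_ne ha] with x hx
    exact cosQuotient_of_ne hx

lemma cosQuotient_add_one {f : ℂ → ℂ} {s : ℂ} (hs : ∀ x, f (x + 1) = s * f x) (x : ℂ) :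
    cosQuotient f (x + 1) = -s * cosQuotient f x := by
  have hd : deriv f (x + 1) = s * deriv f x := by
    rw [← deriv_comp_add_const, ← deriv_const_mul_field]
    exact congrArg (fun g => deriv g x) (funext hs)
  have hdc : deriv (fun x : ℂ => Complex.cos (Real.pi * x)) (x + 1) =
      -deriv (fun x : ℂ => Complex.cos (Real.pi * x)) x := by
    simp only [(hasDerivAt_cos_pi_mul _).deriv]
    rw [mul_add, mul_one, Complex.sin_add_pi]
    ring
  simp only [cosQuotient, cos_pi_mul_add_one, neg_eq_zero, hd, hdc, hs]
  split_ifs <;> rw [div_neg] <;> ring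

lemma eq_zero_of_cos_eq_zero {f : ℂ → ℂ} {s : ℂ} (hs0 : s ≠ 0) (hs : ∀ x, f (x + 1) = s * f x)
    (hf : f (1 / 2) = 0) {x : ℂ} (hx : Complex.cos (Real.pi * x) = 0) : f x = 0 := by
  obtain ⟨k, hk⟩ := Complex.cos_eq_zero_iff.mp hx
  have hpi : (Real.pi : ℂ) ≠ 0 := by exact_mod_cast Real.pi_ne_zero
  have hxk : x = 1 / 2 + k := by
    apply mul_left_cancel₀ hpi
    rw [hk]
    ring
  rw [hxk]
  clear hk hxk hx
  induction k using Int.induction_on with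
  | zero => simpa using hf
  | succ i ih =>
    push_cast at ih ⊢
    rw [← add_assoc, hs, ih, mul_zero]
  | pred i ih =>
    have h := hs (1 / 2 + ((-(i : ℤ) - 1 : ℤ) : ℂ))
    rw [show (1 / 2 : ℂ) + ((-(i : ℤ) - 1 : ℤ) : ℂ) + 1 = 1 / 2 + ((-(i : ℤ) : ℤ) : ℂ) by
      push_cast; ring, ih] at h
    exact (mul_eq_zero.mp h.symm).resolve_left hs0

open Asymptotics in
/-- A quasi-periodic entire function vanishing to order `k` at `1/2` is divisible by
`cos (π x) ^ k`. -/
lemma exists_eq_cos_pow_mul (k : ℕ) {f : ℂ → ℂ} {s : ℂ} (hs0 : s ≠ 0) (hf : Differentiable ℂ f)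
    (hs : ∀ x, f (x + 1) = s * f x)
    (hO : f =O[nhdsWithin (1 / 2) {1 / 2}ᶜ] fun x => (x - 1 / 2) ^ k) :
    ∃ g : ℂ → ℂ, Differentiable ℂ g ∧ (∀ x, g (x + 1) = (-1) ^ k * s * g x) ∧
      ∀ x, f x = Complex.cos (Real.pi * x) ^ k * g x := by
  induction k generalizing f s with
  | zero => exact ⟨f, hf, by simpa using hs, by simp⟩
  | succ k ih =>
    have hhalf : f (1 / 2) = 0 := by
      have h1 : Filter.Tendsto (fun x : ℂ => (x - 1 / 2) ^ (k + 1))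
          (nhdsWithin (1 / 2) {1 / 2}ᶜ) (nhds 0) := by
        have : Continuous fun x : ℂ => (x - 1 / 2) ^ (k + 1) := by fun_prop
        simpa using (this.tendsto (1 / 2)).mono_left nhdsWithin_le_nhds
      exact tendsto_nhds_unique ((hf.continuous.tendsto (1 / 2)).mono_left nhdsWithin_le_nhds)
        (hO.trans_tendsto h1)
    have h0 := fun x => eq_zero_of_cos_eq_zero hs0 hs hhalf (x := x)
    have hmul : ∀ x, f x = Complex.cos (Real.pi * x) * cosQuotient f x := fun x => by
      by_cases hx : Complex.cos (Real.pi * x) = 0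
      · rw [h0 x hx, hx, zero_mul]
      · rw [cosQuotient_of_ne hx, mul_div_cancel₀ _ hx]
    set c : ℂ → ℂ := fun x => Complex.cos (Real.pi * x)
    have hca : dslope c (1 / 2) (1 / 2) ≠ 0 := by
      rw [dslope_same]
      exact deriv_cos_pi_mul_ne_zero cos_pi_mul_half
    have hcont := (differentiable_dslope differentiable_cos_pi_mul (1 / 2)).continuous
    have hbound : (fun x => (dslope c (1 / 2) x)⁻¹) =O[nhdsWithin (1 / 2) {1 / 2}ᶜ]
        fun _ => (1 : ℂ) :=
      ((hcont.tendsto (1 / 2)).inv₀ hca).mono_left nhdsWithin_le_nhds |>.isBigO_one ℂ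
    have hinv : (fun x : ℂ => (x - 1 / 2)⁻¹) =O[nhdsWithin (1 / 2) {1 / 2}ᶜ]
        fun x => (x - 1 / 2)⁻¹ := isBigO_refl _ _
    have hquot : cosQuotient f =O[nhdsWithin (1 / 2) {1 / 2}ᶜ] fun x => (x - 1 / 2) ^ k := by
      refine ((hO.mul hinv).mul hbound).congr' ?_ ?_
      · filter_upwards [self_mem_nhdsWithin, nhdsWithin_le_nhds
          (hcont.continuousAt.eventually_ne hca)] with x hx hx'
        have hsub : x - 1 / 2 ≠ 0 := sub_ne_zero.mpr hx
        have hcx : dslope c (1 / 2) x = Complex.cos (Real.pi * x) / (x - 1 / 2) :=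
          dslope_cos_pi_mul cos_pi_mul_half hx
        have hx'' : Complex.cos (Real.pi * x) ≠ 0 := fun h => hx' (by rw [hcx, h, zero_div])
        rw [cosQuotient_of_ne hx'', hcx, inv_div, mul_assoc, mul_div, inv_mul_cancel₀ hsub,
          mul_one_div]
      · filter_upwards [self_mem_nhdsWithin] with x hx
        have hsub : x - 1 / 2 ≠ 0 := sub_ne_zero.mpr hx
        rw [mul_one, pow_succ, mul_assoc, mul_inv_cancel₀ hsub, mul_one]
    obtain ⟨g, hg, hgs, hfg⟩ := ih (neg_ne_zero.mpr hs0) (differentiable_cosQuotient hf h0)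
      (cosQuotient_add_one hs) hquot
    refine ⟨g, hg, fun x => by rw [hgs, pow_succ]; ring, fun x => ?_⟩
    rw [hmul, hfg, pow_succ]
    ring

lemma mul_invGamma_zero (x : ℂ) :
    x * invGamma 0 x = Complex.sin (Real.pi * x) / Real.pi := by
  have h := Complex.one_div_Gamma_eq_self_mul_one_div_Gamma_add_one x
  have h' := Complex.Gamma_mul_Gamma_one_sub x
  rw [invGamma, Nat.cast_zero, zero_add, add_comm 1 x, ← mul_assoc, ← h, ← mul_inv, h', inv_div]

lemma norm_exp_mul_I_le (z : ℂ) : ‖Complex.exp (z * Complex.I)‖ ≤ Real.exp |z.im| := by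
  rw [Complex.norm_exp]
  gcongr
  simpa using neg_le_abs z.im

lemma norm_exp_neg_mul_I_le (z : ℂ) : ‖Complex.exp (-z * Complex.I)‖ ≤ Real.exp |z.im| := by
  simpa using norm_exp_mul_I_le (-z)

lemma norm_sin_le_exp (z : ℂ) : ‖Complex.sin z‖ ≤ Real.exp |z.im| := by
  rw [Complex.sin, norm_div, norm_mul, Complex.norm_I, mul_one, Complex.norm_ofNat,
    div_le_iff₀ two_pos]
  exact (norm_sub_le _ _).trans
    (by linarith [norm_exp_mul_I_le z, norm_exp_neg_mul_I_le z])

lemma norm_cos_le_exp (z : ℂ) : ‖Complex.cos z‖ ≤ Real.exp |z.im| := by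
  rw [Complex.cos, norm_div, Complex.norm_ofNat, div_le_iff₀ two_pos]
  exact (norm_add_le _ _).trans
    (by linarith [norm_exp_mul_I_le z, norm_exp_neg_mul_I_le z])

lemma exp_le_four_mul_norm_cos {z : ℂ} (hz : 1 ≤ |z.im|) :
    Real.exp |z.im| ≤ 4 * ‖Complex.cos z‖ := by
  have key : ∀ t : ℝ, 1 ≤ t → Real.exp (-t) ≤ Real.exp t / 2 := fun t ht => by
    rw [Real.exp_neg, inv_eq_one_div, div_le_div_iff₀ (Real.exp_pos t) two_pos]
    nlinarith [Real.add_one_le_exp t]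
  have h1 : ‖Complex.exp (z * Complex.I)‖ = Real.exp (-z.im) := by
    rw [Complex.norm_exp]; simp
  have h2 : ‖Complex.exp (-z * Complex.I)‖ = Real.exp z.im := by
    rw [Complex.norm_exp]; simp
  have h3 : ‖Complex.exp (z * Complex.I) + Complex.exp (-z * Complex.I)‖ = 2 * ‖Complex.cos z‖ := by
    rw [Complex.cos, norm_div, Complex.norm_ofNat]
    ring
  rcases abs_cases z.im with ⟨h, -⟩ | ⟨h, -⟩
  · rw [h] at hz ⊢
    have := key _ hz
    have := norm_sub_le_norm_add (Complex.exp (-z * Complex.I)) (Complex.exp (z * Complex.I))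
    rw [add_comm, h3, h1, h2] at this
    linarith
  · rw [h] at hz ⊢
    have h4 := key _ hz
    rw [neg_neg] at h4
    have := norm_sub_le_norm_add (Complex.exp (z * Complex.I)) (Complex.exp (-z * Complex.I))
    rw [h3, h1, h2] at this
    linarith

lemma abs_im_pi_mul (x : ℂ) : |((Real.pi : ℂ) * x).im| = Real.pi * |x.im| := by
  rw [Complex.im_ofReal_mul, abs_mul, abs_of_pos Real.pi_pos]

lemma norm_invGamma_zero_le {x : ℂ} (hx : 1 ≤ |x.im|) :
    ‖invGamma 0 x‖ ≤ Real.exp (Real.pi * |x.im|) := by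
  have h := congrArg norm (mul_invGamma_zero x)
  rw [norm_mul, norm_div, Complex.norm_real, Real.norm_of_nonneg Real.pi_pos.le] at h
  have h1 : 1 ≤ ‖x‖ := hx.trans (Complex.abs_im_le_norm x)
  calc ‖invGamma 0 x‖ ≤ ‖x‖ * ‖invGamma 0 x‖ := le_mul_of_one_le_left (norm_nonneg _) h1
    _ = _ := h
    _ ≤ ‖Complex.sin (Real.pi * x)‖ :=
      div_le_self (norm_nonneg _) (by linarith [Real.pi_gt_three])
    _ ≤ _ := by rw [← abs_im_pi_mul]; exact norm_sin_le_exp _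

lemma norm_add_half_sub_le {x : ℂ} (hx : x.re ≤ 1 / 2) (j : ℕ) :
    ‖(j : ℂ) + 1 / 2 - x‖ ≤ ‖(j : ℂ) + 1 - x‖ := by
  have hj : (0 : ℝ) ≤ j := j.cast_nonneg
  rw [← sq_le_sq₀ (norm_nonneg _) (norm_nonneg _), Complex.sq_norm, Complex.sq_norm,
    Complex.normSq_apply, Complex.normSq_apply]
  simp
  nlinarith

lemma norm_half_factor_le {x : ℂ} (hx : |x.re| ≤ 1 / 2) (j : ℕ) :
    ‖((j : ℂ) + 1 / 2) ^ 2 - x ^ 2‖ ≤ ‖((j : ℂ) + 1) ^ 2 - x ^ 2‖ := by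
  obtain ⟨h1, h2⟩ := abs_le.mp hx
  have h3 := norm_add_half_sub_le h2 j
  have h4 := norm_add_half_sub_le (x := -x) (by simpa using by linarith) j
  rw [sub_neg_eq_add, sub_neg_eq_add] at h4
  rw [sq_sub_sq, sq_sub_sq, norm_mul, norm_mul]
  gcongr

lemma norm_add_half_sub_sq_le {x : ℂ} (hx : |x.re| ≤ 1 / 2) (j : ℕ) :
    ‖(j : ℂ) + 1 / 2 - x‖ ^ 2 ≤ ((j : ℝ) + 1) ^ 2 + |x.im| ^ 2 := by
  have hj : (0 : ℝ) ≤ j := j.cast_nonneg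
  obtain ⟨h1, h2⟩ := abs_le.mp hx
  rw [Complex.sq_norm, Complex.normSq_apply, sq_abs]
  simp
  nlinarith

lemma norm_half_factor_le_sq_add {x : ℂ} (hx : |x.re| ≤ 1 / 2) (j : ℕ) :
    ‖((j : ℂ) + 1 / 2) ^ 2 - x ^ 2‖ ≤ ((j : ℝ) + 1) ^ 2 + |x.im| ^ 2 := by
  have h1 := norm_add_half_sub_sq_le hx j
  have h2 := norm_add_half_sub_sq_le (x := -x) (by simpa using hx) j
  rw [sub_neg_eq_add, Complex.neg_im, abs_neg] at h2
  rw [sq_sub_sq, norm_mul]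
  nlinarith [sq_nonneg (‖(j : ℂ) + 1 / 2 + x‖ - ‖(j : ℂ) + 1 / 2 - x‖)]

lemma norm_halfProd_mul_invGamma_le {x : ℂ} (hx : |x.re| ≤ 1 / 2) (n : ℕ) :
    ‖halfProd n x * invGamma n x‖ ≤ ‖invGamma 0 x‖ := by
  induction n with
  | zero => simp [halfProd]
  | succ n ih =>
    refine le_trans ?_ ih
    rw [halfProd_succ, invGamma_eq_mul_succ n, mul_assoc, norm_mul, norm_mul, norm_mul, norm_mul]
    gcongr
    exact norm_half_factor_le hx n

lemma norm_core_le_exp {x : ℂ} (hx : |x.re| ≤ 1 / 2) (hx' : 1 ≤ |x.im|) (n : ℕ) :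
    ‖core n x‖ ≤ (1 / 2) ^ n * Real.exp ((9 + Real.pi) * |x.im|) := by
  rw [norm_core]
  have h1 := coeff_mul_pow_le n (norm_nonneg _)
    (norm_halfProd_le n (abs_nonneg x.im) (norm_half_factor_le_sq_add hx))
  have h2 := (norm_halfProd_mul_invGamma_le hx n).trans (norm_invGamma_zero_le hx')
  calc _ ≤ (3 / 4) ^ (6 * n) * Real.exp (3 / 2 * |x.im|) ^ 6 * Real.exp (Real.pi * |x.im|) := by
        gcongr
    _ ≤ (1 / 2) ^ n * Real.exp (3 / 2 * |x.im|) ^ 6 * Real.exp (Real.pi * |x.im|) := by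
        rw [pow_mul]
        gcongr
        norm_num
    _ = _ := by
        rw [← Real.exp_nat_mul, mul_assoc, ← Real.exp_add]
        congr 2
        push_cast
        ring

/-- A polynomial in the norm is absorbed by an exponential of the imaginary part in a vertical
strip. -/
lemma exists_one_add_norm_pow_le (k : ℕ) {ε : ℝ} (hε : 0 < ε) :
    ∃ C : ℝ, 0 ≤ C ∧ ∀ x : ℂ, |x.re| ≤ 1 / 2 → 1 ≤ |x.im| →
      (1 + ‖x‖) ^ k ≤ C * Real.exp (ε * |x.im|) := by
  refine ⟨k.factorial * (3 / ε) ^ k, by positivity, fun x hx hx' => ?_⟩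
  have h1 : 1 + ‖x‖ ≤ 3 / ε * (ε * |x.im|) := by
    have := Complex.norm_le_abs_re_add_abs_im x
    have h2 : 3 / ε * (ε * |x.im|) = 3 * |x.im| := by field_simp
    linarith
  have h3 := Real.pow_div_factorial_le_exp (ε * |x.im|) (by positivity) k
  rw [div_le_iff₀ (by positivity)] at h3
  calc (1 + ‖x‖) ^ k ≤ (3 / ε * (ε * |x.im|)) ^ k := by gcongr
    _ = (3 / ε) ^ k * (ε * |x.im|) ^ k := mul_pow _ _ _
    _ ≤ (3 / ε) ^ k * (Real.exp (ε * |x.im|) * k.factorial) := by gcongr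
    _ = _ := by ring

lemma exists_norm_series_le :
    ∃ C : ℝ, 0 ≤ C ∧ ∀ x : ℂ, |x.re| ≤ 1 / 2 → 1 ≤ |x.im| →
      ‖series x‖ ≤ C * Real.exp (4 * (Real.pi * |x.im|)) := by
  obtain ⟨k, u, hu, hu0, hbound⟩ := polyGrowth_numPoly.exists_summable_bound
  obtain ⟨C, hC, hpow⟩ := exists_one_add_norm_pow_le k (ε := 3 * Real.pi - 9)
    (by linarith [Real.pi_gt_three])
  refine ⟨C * ∑' n, u n, mul_nonneg hC (tsum_nonneg hu0), fun x hx hx' => ?_⟩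
  have hterm : ∀ n, ‖term n x‖ ≤ C * Real.exp (4 * (Real.pi * |x.im|)) * u n := fun n => by
    rw [term, norm_mul]
    have := hu0 n
    calc _ ≤ ‖numPoly n x‖ * ((1 / 2) ^ n * Real.exp ((9 + Real.pi) * |x.im|)) := by
          gcongr; exact norm_core_le_exp hx hx' n
      _ = ‖numPoly n x‖ * (1 / 2) ^ n * Real.exp ((9 + Real.pi) * |x.im|) := by ring
      _ ≤ (C * Real.exp ((3 * Real.pi - 9) * |x.im|) * u n) *
          Real.exp ((9 + Real.pi) * |x.im|) :=
          mul_le_mul_of_nonneg_right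
            ((hbound n x).trans (mul_le_mul_of_nonneg_right (hpow x hx hx') this))
            (Real.exp_pos _).le
      _ = C * (Real.exp ((3 * Real.pi - 9) * |x.im|) * Real.exp ((9 + Real.pi) * |x.im|)) *
          u n := by ring
      _ = _ := by rw [← Real.exp_add]; ring_nf
  calc ‖series x‖ ≤ ∑' n, C * Real.exp (4 * (Real.pi * |x.im|)) * u n :=
        tsum_of_norm_bounded (hu.mul_left _).hasSum hterm
    _ = _ := by rw [tsum_mul_left]; ring

lemma term_zero_eq (x : ℂ) :
    term 0 x = (x - 1 / 2) ^ 3 *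
      (-(8 * (1 + 2 * x) ^ 3 * (16 * x ^ 4 - 24 * x ^ 2 + 21) * invGamma 0 x)) := by
  have hc : coeff 0 = 1 := by simp [coeff, risingFactorial]
  simp only [term, core, numPoly, halfProd, hc, Finset.prod_range_zero]
  push_cast
  ring

lemma invGamma_zero_half : invGamma 0 (1 / 2) = 2 / Real.pi := by
  have h := mul_invGamma_zero (1 / 2)
  rw [mul_one_div (Real.pi : ℂ), Complex.sin_pi_div_two] at h
  linear_combination 2 * h

/-- The difference between the series and its closed form. -/
noncomputable def defect (x : ℂ) : ℂ :=
  series x - 2048 / (Real.pi : ℂ) ^ 4 * Complex.cos (Real.pi * x) ^ 3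

lemma differentiable_defect : Differentiable ℂ defect :=
  differentiable_series.sub ((differentiable_cos_pi_mul.pow 3).const_mul _)

lemma defect_add_one (x : ℂ) : defect (x + 1) = -1 * defect x := by
  simp only [defect, series_add_one, cos_pi_mul_add_one]
  ring

open Asymptotics in
lemma isBigO_term_zero_sub :
    (fun x => term 0 x - 2048 / (Real.pi : ℂ) ^ 4 * Complex.cos (Real.pi * x) ^ 3)
      =O[nhdsWithin (1 / 2) {1 / 2}ᶜ] fun x => (x - 1 / 2) ^ 4 := by
  set d : ℂ → ℂ := dslope (fun x : ℂ => Complex.cos (Real.pi * x)) (1 / 2) with hd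
  let b : ℂ → ℂ := fun x =>
    -(8 * (1 + 2 * x) ^ 3 * (16 * x ^ 4 - 24 * x ^ 2 + 21) * invGamma 0 x) -
      2048 / (Real.pi : ℂ) ^ 4 * d x ^ 3
  have hpi : (Real.pi : ℂ) ≠ 0 := by exact_mod_cast Real.pi_ne_zero
  have hdd : Differentiable ℂ d := differentiable_dslope differentiable_cos_pi_mul _
  have hb : Differentiable ℂ b := by
    have := differentiable_invGamma 0
    fun_prop
  have hb0 : b (1 / 2) = 0 := by
    have hd0 : d (1 / 2) = -Real.pi := by
      rw [hd, dslope_same, (hasDerivAt_cos_pi_mul _).deriv, mul_one_div (Real.pi : ℂ),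
        Complex.sin_pi_div_two]
      ring
    simp only [b, hd0, invGamma_zero_half]
    field_simp
    norm_num
  have hbO : b =O[nhdsWithin (1 / 2) {1 / 2}ᶜ] fun x => x - 1 / 2 := by
    have h := (hb (1 / 2)).isBigO_sub
    simp only [hb0, sub_zero] at h
    exact h.mono nhdsWithin_le_nhds
  have hcube : (fun x : ℂ => (x - 1 / 2) ^ 3) =O[nhdsWithin (1 / 2) {1 / 2}ᶜ]
      fun x => (x - 1 / 2) ^ 3 := isBigO_refl _ _
  refine (hcube.mul hbO).congr' ?_ (Filter.Eventually.of_forall fun x => by ring)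
  filter_upwards [self_mem_nhdsWithin] with x hx
  have hcos : Complex.cos (Real.pi * x) = (x - 1 / 2) * d x := by
    rw [hd, dslope_cos_pi_mul cos_pi_mul_half hx, mul_div_cancel₀ _ (sub_ne_zero.mpr hx)]
  simp only [b, hcos, term_zero_eq]
  ring

open Asymptotics in
lemma isBigO_series_sub_term_zero :
    (fun x => series x - term 0 x) =O[nhdsWithin (1 / 2) {1 / 2}ᶜ]
      fun x => (x - 1 / 2) ^ 4 := by
  obtain ⟨u, hu, hu0, h⟩ := exists_term_bound (R := 1) zero_le_one
  have hu' : Summable fun n => u (n + 1) := (summable_nat_add_iff 1).mpr hu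
  refine IsBigO.of_bound (∑' n, u (n + 1) * 64) (nhdsWithin_le_nhds ?_)
  filter_upwards [Metric.ball_mem_nhds (1 / 2 : ℂ) (ε := 1 / 2) (by norm_num)] with x hx
  have hx1 : ‖x - 1 / 2‖ ≤ 1 / 2 := (mem_ball_iff_norm.mp hx).le
  have hhalf : ‖(1 / 2 : ℂ)‖ = 1 / 2 := by norm_num
  have hx2 : ‖x‖ ≤ 1 := by
    have := norm_le_norm_sub_add x (1 / 2)
    linarith
  have hx3 : ‖x + 1 / 2‖ ≤ 2 := (norm_add_le _ _).trans (by linarith)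
  have hsum : series x - term 0 x = ∑' n, term (n + 1) x := by
    rw [series, (summable_term x).tsum_eq_zero_add]
    ring
  have hfac : ‖1 / 4 - x ^ 2‖ ^ 6 ≤ 64 * ‖(x - 1 / 2) ^ 4‖ := by
    rw [show 1 / 4 - x ^ 2 = -((x - 1 / 2) * (x + 1 / 2)) by ring, norm_neg, norm_mul, norm_pow]
    calc (‖x - 1 / 2‖ * ‖x + 1 / 2‖) ^ 6
        = ‖x - 1 / 2‖ ^ 4 * (‖x - 1 / 2‖ ^ 2 * ‖x + 1 / 2‖ ^ 6) := by ring
      _ ≤ ‖x - 1 / 2‖ ^ 4 * (1 ^ 2 * 2 ^ 6) := by gcongr; linarith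
      _ = _ := by ring
  rw [hsum, tsum_mul_right]
  calc ‖∑' n, term (n + 1) x‖ ≤ ∑' n, ‖1 / 4 - x ^ 2‖ ^ 6 * u (n + 1) :=
        tsum_of_norm_bounded (hu'.mul_left _).hasSum fun n => (h n x hx2).2
    _ = ‖1 / 4 - x ^ 2‖ ^ 6 * ∑' n, u (n + 1) := tsum_mul_left
    _ ≤ (64 * ‖(x - 1 / 2) ^ 4‖) * ∑' n, u (n + 1) :=
      mul_le_mul_of_nonneg_right hfac (tsum_nonneg fun n => hu0 _)
    _ = _ := by ring

open Asymptotics in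
lemma isBigO_defect :
    defect =O[nhdsWithin (1 / 2) {1 / 2}ᶜ] fun x => (x - 1 / 2) ^ 4 :=
  (isBigO_series_sub_term_zero.add isBigO_term_zero_sub).congr_left fun x => by
    rw [defect]
    ring

lemma exists_norm_defect_le :
    ∃ C : ℝ, ∀ x : ℂ, |x.re| ≤ 1 / 2 → 1 ≤ |x.im| →
      ‖defect x‖ ≤ C * Real.exp (4 * (Real.pi * |x.im|)) := by
  obtain ⟨C, hC, hs⟩ := exists_norm_series_le
  refine ⟨C + ‖2048 / (Real.pi : ℂ) ^ 4‖, fun x hx hx' => ?_⟩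
  have h0 : 0 ≤ Real.pi * |x.im| := mul_nonneg Real.pi_pos.le (abs_nonneg _)
  have hcos : ‖Complex.cos (Real.pi * x)‖ ≤ Real.exp (Real.pi * |x.im|) := by
    rw [← abs_im_pi_mul]
    exact norm_cos_le_exp _
  have hcube : ‖Complex.cos (Real.pi * x)‖ ^ 3 ≤ Real.exp (4 * (Real.pi * |x.im|)) := by
    calc _ ≤ Real.exp (Real.pi * |x.im|) ^ 3 := by gcongr
      _ = Real.exp (3 * (Real.pi * |x.im|)) := by rw [← Real.exp_nat_mul]; norm_num
      _ ≤ _ := by gcongr; norm_num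
  rw [defect, add_mul]
  refine (norm_sub_le _ _).trans (add_le_add (hs x hx hx') ?_)
  rw [norm_mul, norm_pow]
  gcongr

/-- An antiperiodic entire function that is bounded far out in a vertical strip vanishes. -/
lemma eq_zero_of_antiperiodic_of_bounded {g : ℂ → ℂ} (hg : Differentiable ℂ g)
    (hanti : Function.Antiperiodic g 1) {C : ℝ}
    (hC : ∀ x : ℂ, |x.re| ≤ 1 / 2 → 1 ≤ |x.im| → ‖g x‖ ≤ C) (x : ℂ) : g x = 0 := by
  obtain ⟨D, hD⟩ := (isCompact_closedBall (0 : ℂ) 2).exists_bound_of_continuousOn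
    hg.continuous.continuousOn
  have hstrip : ∀ y : ℂ, |y.re| ≤ 1 / 2 → ‖g y‖ ≤ max C D := fun y hy => by
    rcases le_or_gt 1 |y.im| with h | h
    · exact (hC y hy h).trans (le_max_left _ _)
    · refine (hD y ?_).trans (le_max_right _ _)
      rw [mem_closedBall_zero_iff]
      linarith [Complex.norm_le_abs_re_add_abs_im y]
  have hper : Function.Periodic (fun y => ‖g y‖) 1 := fun y => by
    simp only [hanti y, norm_neg]
  have hbd : Bornology.IsBounded (Set.range g) := by
    refine isBounded_iff_forall_norm_le.mpr ⟨max C D, ?_⟩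
    rintro _ ⟨y, rfl⟩
    have h1 := hper.sub_zsmul_eq (x := y) (round y.re)
    rw [← h1]
    refine hstrip _ ?_
    simpa using abs_sub_round y.re
  have h2 := hg.apply_eq_apply_of_bounded hbd (x + 1) x
  rw [hanti x] at h2
  exact self_eq_neg.mp h2.symm

theorem series_eq (x : ℂ) :
    series x = 2048 / (Real.pi : ℂ) ^ 4 * Complex.cos (Real.pi * x) ^ 3 := by
  obtain ⟨g, hg, hgs, hfg⟩ := exists_eq_cos_pow_mul 4 (by norm_num) differentiable_defect
    defect_add_one isBigO_defect
  obtain ⟨C, hC⟩ := exists_norm_defect_le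
  have hzero : g x = 0 := by
    refine eq_zero_of_antiperiodic_of_bounded (C := C * 4 ^ 4) hg
      (fun y => by rw [hgs]; ring) (fun y hy hy' => ?_) x
    have h1 : Real.exp (Real.pi * |y.im|) ≤ 4 * ‖Complex.cos (Real.pi * y)‖ := by
      rw [← abs_im_pi_mul]
      refine exp_le_four_mul_norm_cos ?_
      rw [abs_im_pi_mul]
      nlinarith [Real.pi_gt_three]
    have h2 := hC y hy hy'
    rw [hfg, norm_mul, norm_pow] at h2
    have hexp : Real.exp (4 * (Real.pi * |y.im|)) = Real.exp (Real.pi * |y.im|) ^ 4 := by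
      rw [← Real.exp_nat_mul]
      norm_num
    have hpos : 0 < Real.exp (4 * (Real.pi * |y.im|)) := Real.exp_pos _
    refine le_of_mul_le_mul_left ?_ hpos
    calc Real.exp (4 * (Real.pi * |y.im|)) * ‖g y‖
        ≤ (4 * ‖Complex.cos (Real.pi * y)‖) ^ 4 * ‖g y‖ := by
          rw [hexp]
          gcongr
      _ = 4 ^ 4 * (‖Complex.cos (Real.pi * y)‖ ^ 4 * ‖g y‖) := by ring
      _ ≤ 4 ^ 4 * (C * Real.exp (4 * (Real.pi * |y.im|))) := by gcongr
      _ = _ := by ring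
  have h := hfg x
  rw [hzero, mul_zero, defect] at h
  exact sub_eq_zero.mp h

/-- The summand of the Gourevich series. -/
noncomputable def gourevichTerm (n : ℕ) : ℝ :=
  (1 / 2 ^ 6 : ℝ) ^ n * (risingFactorial (1 / 2) n) ^ 7 / (risingFactorial 1 n) ^ 7 *
    (168 * (n : ℝ) ^ 3 + 76 * (n : ℝ) ^ 2 + 14 * (n : ℝ) + 1)

lemma risingFactorial_succ (a : ℝ) (n : ℕ) :
    risingFactorial a (n + 1) = risingFactorial a n * (a + n) :=
  Finset.prod_range_succ _ _

lemma risingFactorial_one (n : ℕ) : risingFactorial 1 n = n.factorial := by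
  rw [risingFactorial, ← Finset.prod_range_add_one_eq_factorial]
  push_cast
  exact Finset.prod_congr rfl fun j _ => add_comm _ _

lemma gourevichTerm_nonneg (n : ℕ) : 0 ≤ gourevichTerm n := by
  have h1 := risingFactorial_half_nonneg n
  rw [gourevichTerm, risingFactorial_one]
  positivity

lemma gourevichTerm_add (n : ℕ) :
    gourevichTerm (2 * n) + gourevichTerm (2 * n + 1) =
      coeff n * (risingFactorial (1 / 2) (2 * n) / 4 ^ n) ^ 6 *
        ((2 * n + 1) ^ 7 * (168 * (2 * n) ^ 3 + 76 * (2 * n) ^ 2 + 14 * (2 * n) + 1) +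
          (2 * n + 1 / 2) ^ 7 / 64 *
            (168 * (2 * n + 1) ^ 3 + 76 * (2 * n + 1) ^ 2 + 14 * (2 * n + 1) + 1)) := by
  have hf : ((2 * n).factorial : ℝ) ≠ 0 := by positivity
  have hn : (2 * (n : ℝ) + 1) ≠ 0 := by positivity
  have hpow : (1 / 2 ^ 6 : ℝ) ^ (2 * n) = 1 / (4 ^ n) ^ 6 := by
    rw [one_div, inv_pow, ← pow_mul, one_div, show (4 : ℝ) = 2 ^ 2 by norm_num, ← pow_mul,
      ← pow_mul]
    ring_nf
  rw [gourevichTerm, gourevichTerm, coeff, risingFactorial_one, risingFactorial_one,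
    risingFactorial_succ, pow_succ _ (2 * n), hpow, Nat.factorial_succ]
  push_cast
  field_simp
  ring

lemma halfProd_quarter (n : ℕ) :
    halfProd n (1 / 4) = ((risingFactorial (1 / 2) (2 * n) / 4 ^ n : ℝ) : ℂ) := by
  induction n with
  | zero => simp [halfProd, risingFactorial]
  | succ n ih =>
    rw [halfProd_succ, ih, show 2 * (n + 1) = 2 * n + 1 + 1 by ring, risingFactorial_succ,
      risingFactorial_succ]
    push_cast
    field_simp
    ring

lemma halfProd_mul_invGamma_quarter (n : ℕ) :
    halfProd n (1 / 4) * invGamma n (1 / 4) * (n + 1 / 4) =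
      Complex.sin (Real.pi * (1 / 4)) / Real.pi := by
  induction n with
  | zero =>
    rw [← mul_invGamma_zero, halfProd, Finset.prod_range_zero, Nat.cast_zero]
    ring
  | succ n ih =>
    rw [← ih, halfProd_succ, invGamma_eq_mul_succ n]
    push_cast
    ring

lemma numPoly_quarter (n : ℂ) :
    numPoly n (1 / 4) = 32 * (n + 1 / 4) *
      ((2 * n + 1) ^ 7 * (168 * (2 * n) ^ 3 + 76 * (2 * n) ^ 2 + 14 * (2 * n) + 1) +
        (2 * n + 1 / 2) ^ 7 / 64 *
          (168 * (2 * n + 1) ^ 3 + 76 * (2 * n + 1) ^ 2 + 14 * (2 * n + 1) + 1)) := by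
  unfold numPoly
  ring

lemma sin_pi_mul_quarter : Complex.sin (Real.pi * (1 / 4)) = ((√2 / 2 : ℝ) : ℂ) := by
  rw [← Real.sin_pi_div_four]
  push_cast
  rw [mul_one_div]

lemma cos_pi_mul_quarter : Complex.cos (Real.pi * (1 / 4)) = ((√2 / 2 : ℝ) : ℂ) := by
  rw [← Real.cos_pi_div_four]
  push_cast
  rw [mul_one_div]

lemma term_quarter (n : ℕ) :
    term n (1 / 4) =
      ((16 * √2 / Real.pi * (gourevichTerm (2 * n) + gourevichTerm (2 * n + 1)) : ℝ) : ℂ) := by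
  have h := halfProd_mul_invGamma_quarter n
  rw [sin_pi_mul_quarter] at h
  rw [gourevichTerm_add, term, core, numPoly_quarter]
  push_cast at h ⊢
  calc _ = 32 * coeff n * halfProd n (1 / 4) ^ 6 *
        (halfProd n (1 / 4) * invGamma n (1 / 4) * (n + 1 / 4)) *
        ((2 * n + 1) ^ 7 * (168 * (2 * n) ^ 3 + 76 * (2 * n) ^ 2 + 14 * (2 * n) + 1) +
          (2 * n + 1 / 2) ^ 7 / 64 *
            (168 * (2 * n + 1) ^ 3 + 76 * (2 * n + 1) ^ 2 + 14 * (2 * n + 1) + 1)) := by ring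
    _ = _ := by
      rw [h, halfProd_quarter]
      push_cast
      ring

lemma hasSum_gourevichTerm_add :
    HasSum (fun n => gourevichTerm (2 * n) + gourevichTerm (2 * n + 1)) (32 / Real.pi ^ 3) := by
  have h := (summable_term (1 / 4)).hasSum
  change HasSum _ (series (1 / 4)) at h
  rw [series_eq, cos_pi_mul_quarter] at h
  simp only [term_quarter] at h
  have h' : HasSum
      (fun n => 16 * √2 / Real.pi * (gourevichTerm (2 * n) + gourevichTerm (2 * n + 1)))
      (2048 / Real.pi ^ 4 * (√2 / 2) ^ 3) := by exact_mod_cast h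
  have hpi := Real.pi_ne_zero
  have hsqrt : √2 ≠ 0 := by positivity
  have hsq : √2 ^ 2 = 2 := Real.sq_sqrt zero_le_two
  have hval : Real.pi / (16 * √2) * (2048 / Real.pi ^ 4 * (√2 / 2) ^ 3) = 32 / Real.pi ^ 3 := by
    field_simp
    rw [hsq]
    norm_num
  rw [← hval]
  refine (h'.mul_left (Real.pi / (16 * √2))).congr_fun fun n => ?_
  field_simp

theorem hasSum_gourevichTerm : HasSum gourevichTerm (32 / Real.pi ^ 3) := by
  have h := hasSum_gourevichTerm_add
  have he : Summable fun n => gourevichTerm (2 * n) :=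
    Summable.of_nonneg_of_le (fun n => gourevichTerm_nonneg _)
      (fun n => le_add_of_nonneg_right (gourevichTerm_nonneg _)) h.summable
  have ho : Summable fun n => gourevichTerm (2 * n + 1) :=
    Summable.of_nonneg_of_le (fun n => gourevichTerm_nonneg _)
      (fun n => le_add_of_nonneg_left (gourevichTerm_nonneg _)) h.summable
  rw [h.unique (he.hasSum.add ho.hasSum)]
  exact he.hasSum.even_add_odd ho.hasSum

end Gourevich

/-- `∑_{n≥0} (1/2^6)^n (1/2)ₙ^7/(1)ₙ^7 (168n³+76n²+14n+1) = 32/π³` (Gourevich). -/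
theorem gourevich_series :
    ∑' n : ℕ, ((1 / 2 ^ 6 : ℝ) ^ n * (risingFactorial (1 / 2) n) ^ 7 /
        (risingFactorial 1 n) ^ 7 *
        (168 * (n : ℝ) ^ 3 + 76 * (n : ℝ) ^ 2 + 14 * (n : ℝ) + 1))
      = 32 / Real.pi ^ 3 := by
  exact Gourevich.hasSum_gourevichTerm.tsum_eq
end
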